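/- arXiv:2009.01097 — 2 statements merged into one kernel-verified Lean document; each statement's English description precedes it below -/
import Mathlib

section
/- Let φ : A → B and ψ : B → A be homomorphisms of commutative noetherian rings with ψ ∘ φ = id_A (a ring retraction). Assume that (i) B is flat as an A-module via φ, (ii) the surjection ψ is a local complete intersection, (iii) A is a perfect B-module via ψ, and (iv) A is nonzero and Spec(A) is connected. Then there exists an integer n ≥ 0 such that Ext^i_B(A, B) = 0 for all i ≠ n, and Ext^n_B(A, B) is an invertible A-module. -/
universe u

open CategoryTheory

/-- A module `M` over `R` is *perfect of length at most `n`*: this encodes the existence of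
a resolution `0 → P_n → ⋯ → P_0 → M → 0` by finitely generated projective `R`-modules,
via iterated kernels of surjections from finitely generated projective modules. -/
def Module.IsPerfectLE (R : Type u) [CommRing R] :
    ∀ (_n : ℕ) (M : Type u) [AddCommGroup M] [Module R M], Prop
  | 0, M, _, _ => Module.Finite R M ∧ Module.Projective R M
  | n + 1, M, _, _ => ∃ (P : Type u) (_ : AddCommGroup P) (_ : Module R P)
      (f : P →ₗ[R] M), Module.Finite R P ∧ Module.Projective R P ∧
        Function.Surjective f ∧ Module.IsPerfectLE R n (LinearMap.ker f)

/-- A module is *perfect* if it admits a finite length resolution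
`0 → P_n → ⋯ → P_0 → M → 0` by finitely generated projective modules. -/
def Module.IsPerfect (R : Type u) [CommRing R] (M : Type u) [AddCommGroup M] [Module R M] :
    Prop :=
  ∃ n : ℕ, Module.IsPerfectLE R n M

/-- An `R`-module `L` is *invertible* if there is an `R`-module `L'` with `L ⊗[R] L' ≅ R`. -/
def Module.IsInvertible (R : Type u) [CommRing R] (L : Type u) [AddCommGroup L] [Module R L] :
    Prop :=
  ∃ (L' : Type u) (_ : AddCommGroup L') (_ : Module R L'),
    Nonempty ((TensorProduct R L L') ≃ₗ[R] R)

/-- A surjective ring homomorphism `ψ : B →+* A` is a *local complete intersection* if for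
every prime `q` of `A`, with `p = ψ⁻¹(q)`, the kernel of the induced local homomorphism
`B_p →+* A_q` is generated by a `B_p`-regular sequence. -/
def RingHom.IsLocalCompleteIntersection {B A : Type u} [CommRing B] [CommRing A]
    (ψ : B →+* A) : Prop :=
  ∀ (q : Ideal A) (hq : q.IsPrime),
    haveI := hq
    haveI : (q.comap ψ).IsPrime := hq.comap ψ
    ∃ rs : List (Localization.AtPrime (q.comap ψ)),
      RingTheory.Sequence.IsRegular (Localization.AtPrime (q.comap ψ)) rs ∧
      RingHom.ker (Localization.localRingHom (q.comap ψ) q ψ rfl) = Ideal.ofList rs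

/-!
`Ext` of finitely generated modules over a noetherian ring commutes with localization, so the claim
can be checked at a prime `q` of `A`. With `p = ψ⁻¹(q)`, there `A_q = B_p / (x₁, …, xₙ)` for a
regular sequence: below degree `n` the modules `Ext^i(A_q, B_p)` vanish by depth, above it because
`A_q` has projective dimension `n`, and since each `xⱼ` kills `A_q`, dimension shifting along
`0 → B_p → B_p → B_p / x₁ → 0` identifies `Ext^n(A_q, B_p)` with `Hom(A_q, A_q) = A_q`.
Hence every `Ext^i_B(A, B)` is finitely generated projective over `A`, of rank `0` or `1` at each
prime. The rank is locally constant, so connectedness of `Spec A` makes the degree `n` independent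
of `q`.
-/

section Invertible

variable {R M : Type*} [CommRing R] [AddCommGroup M] [Module R M] [Module.FinitePresentation R M]

theorem lsmul_bijective_of_invertible_localized_maximal
    (h : ∀ (m : Ideal R) [m.IsMaximal],
      Module.Invertible (Localization.AtPrime m) (LocalizedModule m.primeCompl M)) :
    Function.Bijective (LinearMap.lsmul R M) := by
  let f (m : Ideal R) [m.IsMaximal] := LocalizedModule.mkLinearMap m.primeCompl M
  let g (m : Ideal R) [m.IsMaximal] :=
    IsLocalizedModule.mapExtendScalars m.primeCompl (f m) (f m) (Localization.AtPrime m)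
  refine bijective_of_isLocalized_maximal _
    (fun m _ ↦ Algebra.linearMap R (Localization.AtPrime m)) _ g _ fun m _ ↦ ?_
  have := h m
  have key : IsLocalizedModule.map m.primeCompl (Algebra.linearMap R (Localization.AtPrime m))
      (g m) (LinearMap.lsmul R M) =
      (LinearMap.lsmul (Localization.AtPrime m)
        (LocalizedModule m.primeCompl M)).restrictScalars R := by
    have hone : LinearMap.lsmul R M 1 = LinearMap.id := by ext; simp
    have hmap := IsLocalizedModule.map_apply m.primeCompl
      (Algebra.linearMap R (Localization.AtPrime m)) (g m) (LinearMap.lsmul R M) 1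
    rw [Algebra.linearMap_apply, map_one, hone] at hmap
    refine IsLocalizedModule.linearMap_ext m.primeCompl
      (Algebra.linearMap R (Localization.AtPrime m)) (g m) ?_
    ext : 2
    simp [f, g, hmap]
  rw [key]
  exact Module.Invertible.toModuleEnd_bijective (Localization.AtPrime m)
    (LocalizedModule m.primeCompl M)

theorem invertible_of_localized_maximal
    (h : ∀ (m : Ideal R) [m.IsMaximal],
      Module.Invertible (Localization.AtPrime m) (LocalizedModule m.primeCompl M)) :
    Module.Invertible R M := by
  have : Module.Projective R M := Module.projective_of_localization_maximal fun m _ ↦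
    have := h m; inferInstance
  exact .right (dualTensorHomEquiv R M M ≪≫ₗ
    (LinearEquiv.ofBijective _ (lsmul_bijective_of_invertible_localized_maximal h)).symm)

end Invertible

section Globalization

variable {R ι : Type*} [CommRing R] [ConnectedSpace (PrimeSpectrum R)] {E : ι → Type*}
  [∀ i, AddCommGroup (E i)] [∀ i, Module R (E i)] [∀ i, Module.FinitePresentation R (E i)]

theorem exists_forall_ne_subsingleton_and_invertible
    (h : ∀ p : PrimeSpectrum R, ∃ n,
      (∀ i ≠ n, Subsingleton (LocalizedModule p.asIdeal.primeCompl (E i))) ∧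
      Module.Invertible (Localization.AtPrime p.asIdeal)
        (LocalizedModule p.asIdeal.primeCompl (E n))) :
    ∃ n, (∀ i ≠ n, Subsingleton (E i)) ∧ Module.Invertible R (E n) := by
  choose d hd hinv using h
  have hrank (i p) : Module.rankAtStalk (E i) p ≠ 0 ↔ d p = i := by
    refine ⟨fun hi ↦ ?_, ?_⟩
    · by_contra hne
      have := hd p i (Ne.symm hne)
      exact hi (Module.finrank_zero_of_subsingleton)
    · rintro rfl
      have := hinv p
      simp [Module.rankAtStalk, Module.Invertible.finrank_eq_one]
  have hproj (i) : Module.Projective R (E i) :=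
    Module.projective_of_localization_maximal fun m hm ↦ by
      by_cases hi : i = d ⟨m, hm.isPrime⟩
      · subst hi
        have := hinv ⟨m, hm.isPrime⟩
        infer_instance
      · have := hd _ i hi
        infer_instance
  obtain ⟨p₀⟩ : Nonempty (PrimeSpectrum R) := inferInstance
  have hconst (p) : d p = d p₀ := by
    rw [← hrank, (Module.isLocallyConstant_rankAtStalk (M := E (d p₀))).apply_eq_of_isPreconnected
      isPreconnected_univ (Set.mem_univ p) (Set.mem_univ p₀), hrank]
  refine ⟨d p₀, fun i hi ↦ ?_, invertible_of_localized_maximal fun m hm ↦ ?_⟩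
  · refine (Module.rankAtStalk_eq_zero_iff_subsingleton (R := R)).mp (funext fun p ↦ ?_)
    by_contra hp
    exact hi ((hconst p).symm.trans ((hrank i p).mp hp)).symm
  · rw [← hconst ⟨m, hm.isPrime⟩]
    exact hinv ⟨m, hm.isPrime⟩

end Globalization

section ExtComparison

open Limits

variable {C : Type*} [Category* C] [Abelian C] [HasExt C] {X : C} (P : ProjectiveResolution X)

theorem extMk_zero_eq_zero_iff {Y : C} (f : P.complex.X 0 ⟶ Y) {m : ℕ} (hm : 0 + 1 = m)
    (hf : P.complex.d m 0 ≫ f = 0) : P.extMk f m hm hf = 0 ↔ f = 0 := by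
  refine ⟨fun h ↦ ?_, by rintro rfl; simp⟩
  rw [← P.extEquivCohomologyClass.apply_eq_iff_eq,
    ProjectiveResolution.extEquivCohomologyClass_extMk,
    ProjectiveResolution.extEquivCohomologyClass_zero,
    CochainComplex.HomComplex.CohomologyClass.mk_eq_zero_iff,
    CochainComplex.HomComplex.Cocycle.toSingleMk_mem_coboundaries_iff _ _ _ _ _ 1 (by simp)] at h
  obtain ⟨g, hg⟩ := h
  have hzero : IsZero (P.cochainComplex.X 1) := CochainComplex.isZero_of_isStrictlyLE _ 0 _
  rw [hzero.eq_of_src g 0, comp_zero] at hg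
  rw [← cancel_epi (P.cochainComplexXIso (-(0 : ℕ)) 0 rfl).hom, ← hg, comp_zero]

variable {R : Type*} [Ring R] [Linear R C]

theorem smul_extMk {Y : C} {n m : ℕ} (f : P.complex.X n ⟶ Y) (hm : n + 1 = m)
    (hf : P.complex.d m n ≫ f = 0) (r : R) :
    r • P.extMk f m hm hf = P.extMk (r • f) m hm (by rw [Linear.comp_smul, hf, smul_zero]) := by
  rw [Abelian.Ext.smul_eq_comp_mk₀, P.extMk_comp_mk₀]
  congr 1
  rw [Linear.comp_smul, Category.comp_id]

/-- The map sending a cocycle of `Hom(P, Y)`, for a projective resolution `P` of `X`, to its class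
in `Ext^n(X, Y)`, which identifies derived-functor `Ext` with `Abelian.Ext`. -/
noncomputable def cyclesToExt (Y : C) (n : ℕ) :
    LinearMap.ker ((P.complex.linearYonedaObj R Y).sc n).g.hom →ₗ[R] Abelian.Ext X Y n where
  toFun f := P.extMk f.1 _ (CochainComplex.next ℕ n).symm f.2
  map_add' f g := (P.add_extMk f.1 g.1 _ _ f.2 g.2).symm
  map_smul' r f := (smul_extMk P f.1 _ f.2 r).symm

theorem cyclesToExt_surjective (Y : C) (n : ℕ) :
    Function.Surjective (cyclesToExt (R := R) P Y n) := by
  intro α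
  obtain ⟨f, hf, h⟩ := P.extMk_surjective α _ (CochainComplex.next ℕ n).symm
  exact ⟨⟨f, hf⟩, h⟩

theorem ker_cyclesToExt (Y : C) (n : ℕ) :
    LinearMap.ker (cyclesToExt P Y n) =
      LinearMap.range ((P.complex.linearYonedaObj R Y).sc n).moduleCatToCycles := by
  let K := P.complex.linearYonedaObj R Y
  ext f
  rw [LinearMap.mem_ker, LinearMap.mem_range]
  obtain _ | n := n
  · have hd : (K.sc 0).f = 0 := K.shape _ _ (by simp)
    have hcycles : (K.sc 0).moduleCatToCycles = 0 := by
      ext y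
      exact congrArg (fun g ↦ g.hom y) hd
    rw [hcycles]
    exact (extMk_zero_eq_zero_iff P f.1 (CochainComplex.next ℕ 0).symm f.2).trans
      ⟨fun h ↦ ⟨0, (Subtype.ext h).symm⟩, fun ⟨_, h⟩ ↦ congrArg Subtype.val h.symm⟩
  · refine (P.extMk_eq_zero_iff f.1 _ (CochainComplex.next ℕ (n + 1)).symm f.2 _ (by simp)).trans
      (exists_congr fun y ↦ ?_)
    exact (Subtype.ext_iff (a1 := (K.sc (n + 1)).moduleCatToCycles y)).symm

variable (R) in
theorem nonempty_ext_linearEquiv [EnoughProjectives C] (X Y : C) (n : ℕ) :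
    Nonempty ((((Ext R C n).obj (Opposite.op X)).obj Y) ≃ₗ[R] Abelian.Ext X Y n) := by
  let P := ProjectiveResolution.of X
  exact ⟨(P.isoExt n Y).toLinearEquiv ≪≫ₗ
    ((P.complex.linearYonedaObj R Y).sc n).moduleCatHomologyIso.toLinearEquiv ≪≫ₗ
    Submodule.quotEquivOfEq _ _ (ker_cyclesToExt P Y n).symm ≪≫ₗ
    (cyclesToExt P Y n).quotKerEquivOfSurjective (cyclesToExt_surjective P Y n)⟩

end ExtComparison

section LocalComputation

open RingTheory.Sequence

variable {R : Type u} [CommRing R]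

theorem smul_ext_eq_zero {M N : ModuleCat.{u} R} {i : ℕ} {x : R}
    (hx : x ∈ Module.annihilator R M) (e : Abelian.Ext M N i) : x • e = 0 := by
  have hid : x • 𝟙 M = 0 := by
    ext m
    exact Module.mem_annihilator.mp hx m
  rw [← Abelian.Ext.mk₀_id_comp e, ← Abelian.Ext.smul_comp, ← Abelian.Ext.mk₀_smul, hid,
    Abelian.Ext.mk₀_zero, Abelian.Ext.zero_comp]

theorem bijective_postcomp_extClass_smulShortComplex {M N : ModuleCat.{u} R} {x : R}
    (hN : IsSMulRegular N x) (hM : x ∈ Module.annihilator R M) (i : ℕ)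
    [Subsingleton (Abelian.Ext M N i)] :
    Function.Bijective
      (hN.smulShortComplex_shortExact.extClass.postcompOfLinear R M (rfl : i + 1 = i + 1)) := by
  have hS := hN.smulShortComplex_shortExact
  constructor
  · rw [injective_iff_map_eq_zero]
    intro a ha
    obtain ⟨b, rfl⟩ := Abelian.Ext.covariant_sequence_exact₃ M hS a rfl ha
    have hb : b = 0 := Subsingleton.elim (α := Abelian.Ext M N i) _ _
    rw [hb, Abelian.Ext.zero_comp]
  · intro e
    have he : e.comp (Abelian.Ext.mk₀ (N.smulShortComplex x).f) (add_zero (i + 1)) = 0 :=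
      (Abelian.Ext.smul_eq_comp_mk₀ e x).symm.trans (smul_ext_eq_zero hM e)
    exact Abelian.Ext.covariant_sequence_exact₁ M hS e he rfl

variable [IsNoetherianRing R]

theorem nonempty_ext_length_linearEquiv_of_isRegular (M : ModuleCat.{u} R) [Module.Finite R M]
    {rs : List R} (hM : Ideal.ofList rs ≤ Module.annihilator R M) (N : ModuleCat.{u} R)
    [Module.Finite R N] (hN : IsRegular N rs) :
    Nonempty (Abelian.Ext M N rs.length ≃ₗ[R]
      (M →ₗ[R] N ⧸ (Ideal.ofList rs • ⊤ : Submodule R N))) := by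
  induction rs generalizing N with
  | nil =>
    exact ⟨Abelian.Ext.linearEquiv₀ ≪≫ₗ ModuleCat.homLinearEquiv ≪≫ₗ
      (LinearEquiv.congrRight (Submodule.quotEquivOfEqBot _ (by simp)).symm)⟩
  | cons x rs ih =>
    have hvanish : Subsingleton (Abelian.Ext M N rs.length) :=
      ModuleCat.subsingleton_ext_of_exists_isRegular (Ideal.ofList (x :: rs)) M
        (by simpa [Module.support_eq_zeroLocus] using PrimeSpectrum.zeroLocus_anti_mono hM) N
        (lt_top_iff_ne_top.mpr hN.top_ne_smul.symm) (x :: rs)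
        (fun y hy ↦ Ideal.subset_span hy) hN _ (by simp)
    obtain ⟨hx, hrs⟩ := (isRegular_cons_iff N x rs).mp hN
    rw [Ideal.ofList_cons, sup_le_iff, Ideal.span_singleton_le_iff_mem] at hM
    obtain ⟨e⟩ := ih hM.2 (ModuleCat.of R (QuotSMulTop x N)) hrs
    let δ := LinearEquiv.ofBijective _
      (bijective_postcomp_extClass_smulShortComplex hx hM.1 rs.length)
    exact ⟨δ.symm ≪≫ₗ e ≪≫ₗ LinearEquiv.congrRight
      (Submodule.quotOfListConsSMulTopEquivQuotSMulTopInner N x rs).symm⟩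

theorem subsingleton_ext_of_isRegular_of_length_lt [IsLocalRing R] {rs : List R}
    (hrs : IsRegular R rs) {M : ModuleCat.{u} R} (e : M ≃ₗ[R] R ⧸ Ideal.ofList rs)
    (N : ModuleCat.{u} R) {i : ℕ} (hi : rs.length < i) : Subsingleton (Abelian.Ext M N i) := by
  have hdim : projectiveDimension M = rs.length :=
    (projectiveDimension_eq_of_iso (e ≪≫ₗ (Shrink.linearEquiv R _).symm).toModuleIso).trans
      (ModuleCat.projectiveDimension_quotient_eq_length rs hrs)
  have : HasProjectiveDimensionLE M rs.length := (projectiveDimension_le_iff M _).mp hdim.le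
  exact HasProjectiveDimensionLT.subsingleton M (rs.length + 1) i hi N

theorem ext_of_linearEquiv_quotient_ofList [IsLocalRing R] {rs : List R} (hrs : IsRegular R rs)
    {M N : ModuleCat.{u} R} (eM : M ≃ₗ[R] R ⧸ Ideal.ofList rs) (eN : N ≃ₗ[R] R) :
    (∀ i ≠ rs.length, Subsingleton (Abelian.Ext M N i)) ∧
      Nonempty (Abelian.Ext M N rs.length ≃ₗ[R] R ⧸ Ideal.ofList rs) := by
  have : Module.Finite R M := .equiv eM.symm
  have : Module.Finite R N := .equiv eN.symm
  have hN : IsRegular N rs := (eN.isRegular_congr rs).mpr hrs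
  have hann : Module.annihilator R M = Ideal.ofList rs :=
    eM.annihilator_eq.trans Ideal.annihilator_quotient
  refine ⟨fun i hi ↦ ?_, ?_⟩
  · obtain hi | hi := hi.lt_or_gt
    · exact ModuleCat.subsingleton_ext_of_exists_isRegular (Ideal.ofList rs) M
        (by rw [Module.support_eq_zeroLocus, hann]) N
        (lt_top_iff_ne_top.mpr hN.top_ne_smul.symm) rs (fun y hy ↦ Ideal.subset_span hy) hN i hi
    · exact subsingleton_ext_of_isRegular_of_length_lt hrs eM N hi
  · obtain ⟨e⟩ := nonempty_ext_length_linearEquiv_of_isRegular M hann.ge N hN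
    have hI : (Ideal.ofList rs • ⊤ : Submodule R N).map eN.toLinearMap = Ideal.ofList rs := by
      rw [Submodule.map_smul'', Submodule.map_top, LinearEquiv.range, smul_eq_mul, Ideal.mul_top]
    exact ⟨e ≪≫ₗ LinearEquiv.arrowCongr eM (Submodule.Quotient.equiv _ _ eN hI) ≪≫ₗ
      LinearMap.extendScalarsOfSurjectiveEquiv Ideal.Quotient.mk_surjective ≪≫ₗ
      LinearMap.ringLmapEquivSelf (R ⧸ Ideal.ofList rs) R _⟩

end LocalComputation

section ExtLocalization

open ModuleCat

variable {B : Type u} [CommRing B] (S : Submonoid B)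

theorem localizedModuleFunctor_map_smul {M N : ModuleCat.{u} B} (b : B) (f : M ⟶ N) :
    (localizedModuleFunctor S).map (b • f) =
      algebraMap B (Localization S) b • (localizedModuleFunctor S).map f := by
  let Φ := IsLocalizedModule.mapExtendScalars S (M.localizedModuleMkLinearMap S)
    (N.localizedModuleMkLinearMap S) (Localization S)
  exact ModuleCat.hom_ext
    ((map_smul Φ b f.hom).trans (algebraMap_smul (Localization S) b (Φ f.hom)).symm)

noncomputable local instance (X Y : ModuleCat.{u} (Localization S)) (n : ℕ) :
    Module B (Abelian.Ext X Y n) :=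
  Module.restrictScalars B (Localization S) _

local instance (X Y : ModuleCat.{u} (Localization S)) (n : ℕ) :
    IsScalarTower B (Localization S) (Abelian.Ext X Y n) :=
  IsScalarTower.restrictScalars B (Localization S) _

/-- The map `Ext_B^n(M, N) → Ext_{S⁻¹B}^n(S⁻¹M, S⁻¹N)` induced by the exact localization functor,
linear over `B`, which acts on the target through `S⁻¹B`. -/
noncomputable def localizeExt (M N : ModuleCat.{u} B) (n : ℕ) :
    Abelian.Ext M N n →ₗ[B]
      Abelian.Ext ((localizedModuleFunctor S).obj M) ((localizedModuleFunctor S).obj N) n where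
  __ := (localizedModuleFunctor S).mapExtAddHom M N n
  map_smul' b e := by
    let F := localizedModuleFunctor S
    change (b • e).mapExactFunctor F = algebraMap B (Localization S) b • e.mapExactFunctor F
    rw [Abelian.Ext.smul_eq_comp_mk₀, Abelian.Ext.smul_eq_comp_mk₀,
      Abelian.Ext.mapExactFunctor_comp, Abelian.Ext.mapExactFunctor_mk₀,
      localizedModuleFunctor_map_smul, F.map_id]

theorem isLocalizedModule_localizeExt_zero (M N : ModuleCat.{u} B)
    [Module.FinitePresentation B M] : IsLocalizedModule S (localizeExt S M N 0) := by
  let F := localizedModuleFunctor S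
  let e : Abelian.Ext M N 0 ≃ₗ[B] (M →ₗ[B] N) :=
    Abelian.Ext.linearEquiv₀.trans ModuleCat.homLinearEquiv
  let e' : Abelian.Ext (F.obj M) (F.obj N) 0 ≃ₗ[Localization S]
      (M.localizedModule S →ₗ[Localization S] N.localizedModule S) :=
    Abelian.Ext.linearEquiv₀.trans ModuleCat.homLinearEquiv
  let Φ := IsLocalizedModule.mapExtendScalars S (M.localizedModuleMkLinearMap S)
    (N.localizedModuleMkLinearMap S) (Localization S)
  have hΦ : localizeExt S M N 0 = (e'.symm.restrictScalars B).toLinearMap ∘ₗ Φ ∘ₗ e := by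
    ext x
    obtain ⟨f, rfl⟩ := (Abelian.Ext.mk₀_bijective M N).2 x
    have he : e (Abelian.Ext.mk₀ f) = f.hom :=
      congrArg Hom.hom (Abelian.Ext.homEquiv₀.apply_symm_apply f)
    change _ = e'.symm (Φ (e (Abelian.Ext.mk₀ f)))
    rw [he]
    exact Abelian.Ext.mapExactFunctor_mk₀ F f
  have : IsLocalizedModule S Φ :=
    Module.FinitePresentation.isLocalizedModule_mapExtendScalars S _ _ (Localization S)
  have : IsLocalizedModule S (Φ ∘ₗ e.toLinearMap) := .of_linearEquiv_right S Φ e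
  exact hΦ ▸ .of_linearEquiv S _ (e'.symm.restrictScalars B)

variable {S} in
theorem isLocalizedModule_localizeExt_succ {T : ShortComplex (ModuleCat.{u} B)}
    (hT : T.ShortExact) [Projective T.X₂] (N : ModuleCat.{u} B) (n : ℕ)
    (h₁ : IsLocalizedModule S (localizeExt S T.X₁ N n))
    (h₂ : IsLocalizedModule S (localizeExt S T.X₂ N n)) :
    IsLocalizedModule S (localizeExt S T.X₃ N (n + 1)) := by
  let F := localizedModuleFunctor S
  have hFT := hT.map_of_exact F
  have : Projective (T.map F).X₂ := F.projective_obj T.X₂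
  let f : Abelian.Ext T.X₂ N n →ₗ[B] Abelian.Ext T.X₁ N n :=
    (Abelian.Ext.mk₀ T.f).precompOfLinear B N (zero_add n)
  let δ : Abelian.Ext T.X₁ N n →ₗ[B] Abelian.Ext T.X₃ N (n + 1) :=
    hT.extClass.precompOfLinear B N (add_comm 1 n)
  let f' : Abelian.Ext (F.obj T.X₂) (F.obj N) n →ₗ[Localization S]
      Abelian.Ext (F.obj T.X₁) (F.obj N) n :=
    (Abelian.Ext.mk₀ (F.map T.f)).precompOfLinear (Localization S) (F.obj N) (zero_add n)
  let δ' : Abelian.Ext (F.obj T.X₁) (F.obj N) n →ₗ[Localization S]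
      Abelian.Ext (F.obj T.X₃) (F.obj N) (n + 1) :=
    hFT.extClass.precompOfLinear (Localization S) (F.obj N) (add_comm 1 n)
  have hf : localizeExt S T.X₁ N n ∘ₗ f = f'.restrictScalars B ∘ₗ localizeExt S T.X₂ N n := by
    ext x
    exact (Abelian.Ext.mapExactFunctor_comp F (Abelian.Ext.mk₀ T.f) x (zero_add n)).trans
      (by rw [Abelian.Ext.mapExactFunctor_mk₀]; rfl)
  have hδ : localizeExt S T.X₃ N (n + 1) ∘ₗ δ =
      δ'.restrictScalars B ∘ₗ localizeExt S T.X₁ N n := by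
    ext x
    exact (Abelian.Ext.mapExactFunctor_comp F hT.extClass x (add_comm 1 n)).trans
      (by rw [Abelian.Ext.mapExactFunctor_extClass]; rfl)
  have hexact : Function.Exact f δ := (ShortComplex.ab_exact_iff_function_exact _).mp
    (Abelian.Ext.contravariant_sequence_exact₁' hT N n (n + 1) (add_comm 1 n))
  have hexact' : Function.Exact f' δ' := (ShortComplex.ab_exact_iff_function_exact _).mp
    (Abelian.Ext.contravariant_sequence_exact₁' hFT (F.obj N) n (n + 1) (add_comm 1 n))
  rw [isLocalizedModule_iff_isBaseChange S (Localization S)] at h₁ h₂ ⊢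
  exact .of_right_exact (Localization S) _ _ _ hf hδ h₂ h₁
    hexact (precomp_extClass_surjective_of_projective_X₂ N hT n)
    hexact' (precomp_extClass_surjective_of_projective_X₂ (F.obj N) hFT n)

theorem isLocalizedModule_localizeExt [IsNoetherianRing B] (M N : ModuleCat.{u} B)
    [Module.Finite B M] (n : ℕ) : IsLocalizedModule S (localizeExt S M N n) := by
  induction n generalizing M with
  | zero =>
    have := Module.finitePresentation_of_finite B M
    exact isLocalizedModule_localizeExt_zero S M N
  | succ n ih =>
    obtain ⟨P, _, _, _, _, f, hf⟩ := Module.exists_finite_presentation B M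
    let T := f.shortComplexKer
    have : Module.Finite B T.X₁ := inferInstanceAs (Module.Finite B (LinearMap.ker f))
    have : Module.Finite B T.X₂ := ‹_›
    exact isLocalizedModule_localizeExt_succ (LinearMap.shortExact_shortComplexKer hf) N n
      (ih T.X₁) (ih T.X₂)

theorem localizedModule_ext_of_isRegular [IsNoetherianRing B] [IsLocalRing (Localization S)]
    (M N : ModuleCat.{u} B) [Module.Finite B M] {rs : List (Localization S)}
    (hrs : RingTheory.Sequence.IsRegular (Localization S) rs)
    (eM : M.localizedModule S ≃ₗ[Localization S] Localization S ⧸ Ideal.ofList rs)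
    (eN : N.localizedModule S ≃ₗ[Localization S] Localization S) :
    (∀ i ≠ rs.length, Subsingleton (LocalizedModule S (Abelian.Ext M N i))) ∧
      ∃ f : Abelian.Ext M N rs.length →ₗ[B] Localization S ⧸ Ideal.ofList rs,
        IsLocalizedModule S f := by
  have hloc := isLocalizedModule_localizeExt S M N
  have : IsNoetherianRing (Localization S) := IsLocalization.isNoetherianRing S _ ‹_›
  obtain ⟨hsub, ⟨e⟩⟩ := ext_of_linearEquiv_quotient_ofList hrs eM eN
  refine ⟨fun i hi ↦ ?_, (e.restrictScalars B).toLinearMap ∘ₗ localizeExt S M N rs.length, ?_⟩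
  · have := hloc i
    have : Subsingleton (Abelian.Ext ((localizedModuleFunctor S).obj M)
        ((localizedModuleFunctor S).obj N) i) := hsub i hi
    exact (IsLocalizedModule.iso S (localizeExt S M N i)).injective.subsingleton
  · have := hloc rs.length
    exact .of_linearEquiv S (localizeExt S M N rs.length) (e.restrictScalars B)

/-- Any localization `Q` of `M` at `S`, with its `S⁻¹B`-module structure, is identified with the
chosen object `M.localizedModule S`. -/
noncomputable def localizedModuleEquivOfIsLocalizedModule (M : ModuleCat.{u} B) {Q : Type*}
    [AddCommGroup Q] [Module B Q] [Module (Localization S) Q] [IsScalarTower B (Localization S) Q]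
    (f : M →ₗ[B] Q) [IsLocalizedModule S f] : M.localizedModule S ≃ₗ[Localization S] Q :=
  (IsLocalizedModule.linearEquiv S (M.localizedModuleMkLinearMap S) f).extendScalarsOfIsLocalization
    S (Localization S)

end ExtLocalization

section SurjectiveAlgebra

variable {A B : Type u} [CommRing A] [CommRing B] [Algebra B A]

theorem isLocalizedModule_localization_atPrime_of_surjective
    (hsurj : Function.Surjective (algebraMap B A)) (p : Ideal B) [p.IsPrime] (q : Ideal A)
    [q.IsPrime] [q.LiesOver p] :
    IsLocalizedModule p.primeCompl
      (IsScalarTower.toAlgHom B A (Localization.AtPrime q)).toLinearMap := by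
  rw [isLocalizedModule_iff_isLocalization,
    Ideal.algebraMapSubmonoid_primeCompl_of_liesOver_surjective q p hsurj]
  infer_instance

theorem nonempty_quotient_linearEquiv_of_surjective {R S : Type*} [CommRing R] [CommRing S]
    [Algebra R S] {I : Ideal R} (hsurj : Function.Surjective (algebraMap R S))
    (hker : RingHom.ker (algebraMap R S) = I) : Nonempty ((R ⧸ I) ≃ₗ[R] S) :=
  ⟨((Ideal.quotientEquivAlgOfEq R hker.symm).trans (Ideal.quotientKerAlgEquivOfSurjective
    (f := Algebra.ofId R S) hsurj)).toLinearEquiv⟩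

theorem localizedModule_ext_of_ker_eq_ofList [IsNoetherianRing B]
    (hsurj : Function.Surjective (algebraMap B A)) (p : Ideal B) [p.IsPrime] (q : Ideal A)
    [q.IsPrime] [q.LiesOver p] [Algebra (Localization.AtPrime p) (Localization.AtPrime q)]
    [Localization.AtPrime.IsLiesOverAlgebra p q] {rs : List (Localization.AtPrime p)}
    (hrs : RingTheory.Sequence.IsRegular (Localization.AtPrime p) rs)
    (hker : RingHom.ker (algebraMap (Localization.AtPrime p) (Localization.AtPrime q)) =
      Ideal.ofList rs) :
    (∀ i ≠ rs.length, Subsingleton (LocalizedModule p.primeCompl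
      (Abelian.Ext (ModuleCat.of B A) (ModuleCat.of B B) i))) ∧
    ∃ f : Abelian.Ext (ModuleCat.of B A) (ModuleCat.of B B) rs.length →ₗ[B]
      Localization.AtPrime q, IsLocalizedModule p.primeCompl f := by
  have hsurj' : Function.Surjective
      (algebraMap (Localization.AtPrime p) (Localization.AtPrime q)) := by
    obtain rfl : p = q.comap (algebraMap B A) := Ideal.LiesOver.over
    rw [Localization.AtPrime.IsLiesOverAlgebra.algebraMap_eq]
    exact RingHom.surjective_localRingHom_of_surjective (algebraMap B A) hsurj q
  obtain ⟨e⟩ := nonempty_quotient_linearEquiv_of_surjective hsurj' hker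
  have : Module.Finite B A := .of_surjective (Algebra.linearMap B A) hsurj
  have := isLocalizedModule_localization_atPrime_of_surjective hsurj p q
  let eA : (ModuleCat.of B A).localizedModule p.primeCompl ≃ₗ[Localization.AtPrime p]
      Localization.AtPrime q :=
    localizedModuleEquivOfIsLocalizedModule p.primeCompl (ModuleCat.of B A)
      (IsScalarTower.toAlgHom B A (Localization.AtPrime q)).toLinearMap
  let eB : (ModuleCat.of B B).localizedModule p.primeCompl ≃ₗ[Localization.AtPrime p]
      Localization.AtPrime p :=
    localizedModuleEquivOfIsLocalizedModule p.primeCompl (ModuleCat.of B B)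
      (Algebra.linearMap B (Localization.AtPrime p))
  obtain ⟨hsub, f, hf⟩ :=
    localizedModule_ext_of_isRegular p.primeCompl _ _ hrs (eA ≪≫ₗ e.symm) eB
  exact ⟨hsub, (e.restrictScalars B).toLinearMap ∘ₗ f,
    .of_linearEquiv p.primeCompl f (e.restrictScalars B)⟩

theorem localizedModule_ext_of_isLocalCompleteIntersection [IsNoetherianRing B]
    (hsurj : Function.Surjective (algebraMap B A))
    (hlci : (algebraMap B A).IsLocalCompleteIntersection) (q : Ideal A) [hq : q.IsPrime] :
    ∃ n, (∀ i ≠ n, Subsingleton (LocalizedModule (q.under B).primeCompl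
        (Abelian.Ext (ModuleCat.of B A) (ModuleCat.of B B) i))) ∧
      ∃ f : Abelian.Ext (ModuleCat.of B A) (ModuleCat.of B B) n →ₗ[B] Localization.AtPrime q,
        IsLocalizedModule (q.under B).primeCompl f := by
  obtain ⟨rs, hrs, hker⟩ := hlci q hq
  let _ := Localization.AtPrime.algebraOfLiesOver (q.under B) q
  exact ⟨rs.length, localizedModule_ext_of_ker_eq_ofList hsurj (q.under B) q hrs hker⟩

theorem subsingleton_localizedModule_primeCompl_of_under (q : Ideal A) [q.IsPrime] {E : Type*}
    [AddCommGroup E] [Module A E] [Module B E] [IsScalarTower B A E]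
    [h : Subsingleton (LocalizedModule (q.under B).primeCompl E)] :
    Subsingleton (LocalizedModule q.primeCompl E) := by
  rw [LocalizedModule.subsingleton_iff] at h ⊢
  intro x
  obtain ⟨b, hb, hbx⟩ := h x
  exact ⟨algebraMap B A b, hb, by rw [algebraMap_smul, hbx]⟩

theorem invertible_localizedModule_primeCompl_of_surjective
    (hsurj : Function.Surjective (algebraMap B A)) (q : Ideal A) [q.IsPrime] {E : Type*}
    [AddCommGroup E] [Module A E] [Module B E] [IsScalarTower B A E]
    (f : E →ₗ[B] Localization.AtPrime q) [hf : IsLocalizedModule (q.under B).primeCompl f] :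
    Module.Invertible (Localization.AtPrime q) (LocalizedModule q.primeCompl E) := by
  let g : E →ₗ[A] Localization.AtPrime q := f.extendScalarsOfSurjective hsurj
  have : IsLocalizedModule (q.under B).primeCompl (g.restrictScalars B) := hf
  have hg := IsLocalizedModule.of_restrictScalars (q.under B).primeCompl g
  rw [Ideal.algebraMapSubmonoid_primeCompl_of_liesOver_surjective q (q.under B) hsurj] at hg
  exact .congr ((IsLocalizedModule.iso q.primeCompl g).symm.extendScalarsOfIsLocalization
    q.primeCompl (Localization.AtPrime q))

end SurjectiveAlgebra

section Duality

/-- The module `Ext^n_R(M, N)`, computed by Mathlib's left derived functors of `Hom(-, N)`, as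
opposed to the morphisms in the derived category that make up `Abelian.Ext`. -/
noncomputable abbrev DerivedExt (R M N : Type u) [CommRing R] [AddCommGroup M] [Module R M]
    [AddCommGroup N] [Module R N] (n : ℕ) : ModuleCat.{u} R :=
  ((Ext R (ModuleCat.{u} R) n).obj (Opposite.op (ModuleCat.of R M))).obj (ModuleCat.of R N)

theorem isInvertible_of_invertible {R L : Type u} [CommRing R] [AddCommGroup L] [Module R L]
    [Module.Invertible R L] : Module.IsInvertible R L :=
  ⟨Module.Dual R L, inferInstance, inferInstance,
    ⟨TensorProduct.comm R L _ ≪≫ₗ Module.Invertible.linearEquiv R L⟩⟩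

variable {A B M N : Type u} [CommRing A] [CommRing B] [Algebra B A] [AddCommGroup M] [Module B M]
  [AddCommGroup N] [Module B N]

theorem smul_derivedExt_eq_smul {b c : B} (hbc : algebraMap B A b = algebraMap B A c) {i : ℕ}
    (x : DerivedExt B A N i) : b • x = c • x := by
  obtain ⟨e⟩ := nonempty_ext_linearEquiv B (ModuleCat.of B A) (ModuleCat.of B N) i
  have hann : b - c ∈ Module.annihilator B A := Module.mem_annihilator.mpr fun a ↦ by
    rw [Algebra.smul_def, map_sub, hbc, sub_self, zero_mul]
  rw [← sub_eq_zero, ← sub_smul, ← e.map_eq_zero_iff, map_smul]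
  exact smul_ext_eq_zero hann (e x)

theorem finite_derivedExt [IsNoetherianRing B] [Module.Finite B M] [Module.Finite B N] (i : ℕ) :
    Module.Finite B (DerivedExt B M N i) := by
  obtain ⟨e⟩ := nonempty_ext_linearEquiv B (ModuleCat.of B M) (ModuleCat.of B N) i
  exact .equiv e.symm

variable [IsNoetherianRing B] [∀ i, Module A (DerivedExt B A B i)]
  [∀ i, IsScalarTower B A (DerivedExt B A B i)]

theorem finitePresentation_derivedExt_of_surjective
    (hsurj : Function.Surjective (algebraMap B A)) (i : ℕ) :
    Module.FinitePresentation A (DerivedExt B A B i) := by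
  have : IsNoetherianRing A := isNoetherianRing_of_surjective B A _ hsurj
  have : Module.Finite B A := .of_surjective (Algebra.linearMap B A) hsurj
  have := finite_derivedExt (B := B) (M := A) (N := B) i
  have : Module.Finite A (DerivedExt B A B i) := .of_restrictScalars_finite B A _
  exact Module.finitePresentation_of_finite A _

theorem localizedModule_derivedExt_of_isLocalCompleteIntersection
    (hsurj : Function.Surjective (algebraMap B A))
    (hlci : (algebraMap B A).IsLocalCompleteIntersection) (q : Ideal A) [q.IsPrime] :
    ∃ n, (∀ i ≠ n, Subsingleton (LocalizedModule q.primeCompl (DerivedExt B A B i))) ∧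
      Module.Invertible (Localization.AtPrime q)
        (LocalizedModule q.primeCompl (DerivedExt B A B n)) := by
  let e (i : ℕ) := (nonempty_ext_linearEquiv B (ModuleCat.of B A) (ModuleCat.of B B) i).some
  obtain ⟨n, hsub, f, hf⟩ := localizedModule_ext_of_isLocalCompleteIntersection hsurj hlci q
  let S := (q.under B).primeCompl
  refine ⟨n, fun i hi ↦ ?_, ?_⟩
  · let g := LocalizedModule.mkLinearMap S
      (Abelian.Ext (ModuleCat.of B A) (ModuleCat.of B B) i) ∘ₗ (e i).toLinearMap
    have : IsLocalizedModule S g := .of_linearEquiv_right S _ (e i)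
    have := hsub i hi
    have : Subsingleton (LocalizedModule S (DerivedExt B A B i)) :=
      (IsLocalizedModule.iso S g).injective.subsingleton
    exact subsingleton_localizedModule_primeCompl_of_under (B := B) q
  · have : IsLocalizedModule S (f ∘ₗ (e n).toLinearMap) := .of_linearEquiv_right S f (e n)
    exact invertible_localizedModule_primeCompl_of_surjective hsurj q (f ∘ₗ (e n).toLinearMap)

theorem vdb_duality_retraction_ext_concentrated_invertible_general
    [ConnectedSpace (PrimeSpectrum A)] (hsurj : Function.Surjective (algebraMap B A))
    (hlci : (algebraMap B A).IsLocalCompleteIntersection) :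
    ∃ n, (∀ i ≠ n, Subsingleton (DerivedExt B A B i)) ∧
      Module.IsInvertible A (DerivedExt B A B n) := by
  have := finitePresentation_derivedExt_of_surjective hsurj
  obtain ⟨n, hsub, hinv⟩ := exists_forall_ne_subsingleton_and_invertible (R := A)
    (E := fun i ↦ DerivedExt B A B i) fun q ↦
      localizedModule_derivedExt_of_isLocalCompleteIntersection hsurj hlci q.asIdeal
  exact ⟨n, hsub, isInvertible_of_invertible⟩

end Duality

/-- **Van den Bergh duality for ring retractions, part 1.**
Let `φ : A →+* B`, `ψ : B →+* A` be homomorphisms of commutative noetherian rings with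
`ψ ∘ φ = id` (a ring retraction).  Assume `B` is flat as an `A`-module via `φ`, the
surjection `ψ` is a local complete intersection, `A` is a perfect `B`-module via `ψ`, and
`A` is nonzero with connected spectrum.  Then there is an `n : ℕ` such that
`Ext^i_B(A, B) = 0` for `i ≠ n` and `Ext^n_B(A, B)` is an invertible `A`-module (where the
`A`-module structure is the canonical one, obtained by restricting the `B`-module structure
along `φ`). -/
theorem vdb_duality_retraction_ext_concentrated_invertible
    {A B : Type u} [CommRing A] [CommRing B]
    [IsNoetherianRing A] [IsNoetherianRing B]
    (φ : A →+* B) (ψ : B →+* A) (hretract : ψ.comp φ = RingHom.id A)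
    (hflat : letI := φ.toModule; Module.Flat A B)
    (hsurj : Function.Surjective ψ)
    (hlci : ψ.IsLocalCompleteIntersection)
    (hperf : letI := ψ.toModule; Module.IsPerfect B A)
    (hnt : Nontrivial A)
    (hconn : ConnectedSpace (PrimeSpectrum A)) :
    ∃ n : ℕ,
      (∀ i : ℕ, i ≠ n →
        letI := ψ.toModule
        Subsingleton (((Ext B (ModuleCat.{u} B) i).obj
          (Opposite.op (ModuleCat.of B A))).obj (ModuleCat.of B B))) ∧
      (letI := ψ.toModule
       letI : Module A (((Ext B (ModuleCat.{u} B) n).obj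
          (Opposite.op (ModuleCat.of B A))).obj (ModuleCat.of B B)) := Module.compHom _ φ
       Module.IsInvertible A (((Ext B (ModuleCat.{u} B) n).obj
          (Opposite.op (ModuleCat.of B A))).obj (ModuleCat.of B B))) := by
  let _ := ψ.toAlgebra
  let _ (i : ℕ) : Module A (DerivedExt B A B i) := Module.compHom _ φ
  have (i : ℕ) : IsScalarTower B A (DerivedExt B A B i) := .of_algebraMap_smul fun b x ↦
    smul_derivedExt_eq_smul (RingHom.congr_fun hretract (ψ b)) x
  exact vdb_duality_retraction_ext_concentrated_invertible_general hsurj hlci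
end

section
/- Let A be a commutative noetherian ring and let B be a flat A-algebra which is essentially of finite type over A. Then B is a perfect module over the enveloping ring B ⊗_A B (acting through the multiplication map μ : B ⊗_A B → B) if and only if B is a formally smooth A-algebra. -/
universe u

/-!
Let `B` be perfect over `B ⊗[A] B` and let `k` be the residue field of `B` at a prime `q`. Since
`B` is flat over its left factor, base change along `B → k` and localization show that `k`, as the
residue field of a rational point, is perfect over `k ⊗[A] B_q`. Choose a surjection `P → B_q`
with `P` smooth over `A`, and let `K` be the kernel of `k ⊗[A] P → k ⊗[A] B_q` and `𝔫` the maximal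
ideal of the rational point of `k ⊗[A] P`. Then `K ∩ 𝔫² ⊆ 𝔫 K`: locally, divide by regular
elements of `𝔪 ∖ 𝔪²`, which preserves perfectness of the residue field, until the depth is zero,
where a perfect residue field forces the ring to be a field. As `B_q` is flat over `A`, this
inclusion yields the Jacobian criterion for `B_q` over `A`.

Conversely, if `B` is smooth over `A`, then `R = B ⊗[A] B` is smooth over `B` and multiplication
is a retraction of `B → R`. Locally on `R` its kernel is generated by étale coordinates, which
form a regular sequence, so the projective dimension of `B` over `R` is at most the number of
generators of the module of differentials of `R` over `B`.
-/

section

open TensorProduct CategoryTheory IsLocalRing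

/-! ### Perfect modules -/

section IsPerfectLE

variable {R : Type u} [CommRing R] {M N : Type u} [AddCommGroup M] [Module R M]
  [AddCommGroup N] [Module R N]

theorem Module.IsPerfectLE.of_linearEquiv {n : ℕ} (e : M ≃ₗ[R] N)
    (h : Module.IsPerfectLE R n M) : Module.IsPerfectLE R n N := by
  cases n with
  | zero =>
    obtain ⟨_, _⟩ := h
    exact ⟨.equiv e, .of_equiv e⟩
  | succ n =>
    obtain ⟨P, _, _, f, hfin, hproj, hf, hker⟩ := h
    refine ⟨P, _, _, e.toLinearMap ∘ₗ f, hfin, hproj, e.surjective.comp hf, ?_⟩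
    rwa [LinearEquiv.ker_comp]

theorem Module.IsPerfect.of_linearEquiv (e : M ≃ₗ[R] N) (h : Module.IsPerfect R M) :
    Module.IsPerfect R N :=
  h.imp fun _ => .of_linearEquiv e

theorem Module.IsPerfectLE.hasProjectiveDimensionLE {n : ℕ} (h : Module.IsPerfectLE R n M) :
    HasProjectiveDimensionLE (ModuleCat.of R M) n := by
  induction n generalizing M with
  | zero =>
    rw [← projective_iff_hasProjectiveDimensionLE_zero, ← IsProjective.iff_projective]
    exact h.2
  | succ n ih =>
    obtain ⟨P, _, _, f, _, hproj, hf, hker⟩ := h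
    exact ((LinearMap.shortExact_shortComplexKer hf).hasProjectiveDimensionLT_X₃_iff n
      ((IsProjective.iff_projective P).mp hproj)).mpr (ih hker)

theorem Module.IsPerfectLE.of_hasProjectiveDimensionLE [IsNoetherianRing R] [Module.Finite R M]
    {n : ℕ} (h : HasProjectiveDimensionLE (ModuleCat.of R M) n) : Module.IsPerfectLE R n M := by
  induction n generalizing M with
  | zero =>
    rw [← projective_iff_hasProjectiveDimensionLE_zero, ← IsProjective.iff_projective] at h
    exact ⟨inferInstance, h⟩
  | succ n ih =>
    obtain ⟨P, _, _, _, _, f, hf⟩ := Module.exists_finite_presentation R M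
    exact ⟨P, _, _, f, inferInstance, inferInstance, hf,
      ih (((LinearMap.shortExact_shortComplexKer hf).hasProjectiveDimensionLT_X₃_iff n
        ((IsProjective.iff_projective P).mp inferInstance)).mp h)⟩

theorem Module.IsPerfect.of_retract [IsNoetherianRing R] [Module.Finite R N]
    (i : N →ₗ[R] M) (r : M →ₗ[R] N) (hri : r ∘ₗ i = .id) (h : Module.IsPerfect R M) :
    Module.IsPerfect R N := by
  obtain ⟨n, h⟩ := h
  have := h.hasProjectiveDimensionLE
  let retract : Retract (ModuleCat.of R N) (ModuleCat.of R M) :=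
    ⟨ModuleCat.ofHom i, ModuleCat.ofHom r, by rw [← ModuleCat.ofHom_comp, hri]; rfl⟩
  exact ⟨n, .of_hasProjectiveDimensionLE (retract.hasProjectiveDimensionLT (n + 1))⟩

theorem Module.IsPerfect.ker_of_projective [IsNoetherianRing R] [Module.Finite R N]
    [Module.Projective R N] {f : N →ₗ[R] M} (hf : Function.Surjective f)
    (h : Module.IsPerfect R M) : Module.IsPerfect R (LinearMap.ker f) := by
  obtain ⟨n, h⟩ := h
  have hM := h.hasProjectiveDimensionLE
  have : HasProjectiveDimensionLT (ModuleCat.of R M) (n + 1 + 1) :=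
    hasProjectiveDimensionLT_of_ge _ (n + 1) _ (by lia)
  exact ⟨n, .of_hasProjectiveDimensionLE
    (((LinearMap.shortExact_shortComplexKer hf).hasProjectiveDimensionLT_X₃_iff n
      ((IsProjective.iff_projective N).mp inferInstance)).mp this)⟩

/- A kernel-stable class `C` of modules on which base change is exact: flatness over a subring, or
regularity of a fixed element. -/
theorem Module.IsPerfectLE.baseChange_of_forall_ker (T : Type u) [CommRing T] [Algebra R T]
    (C : ∀ (X : Type u) [AddCommGroup X] [Module R X], Prop)
    (hC : ∀ {P X : Type u} [AddCommGroup P] [Module R P] [AddCommGroup X] [Module R X]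
      (f : P →ₗ[R] X), Module.Projective R P → Function.Surjective f → C X →
      C (LinearMap.ker f) ∧ Function.Injective ((LinearMap.ker f).subtype.baseChange T))
    {n : ℕ} (hM : C M) (h : Module.IsPerfectLE R n M) : Module.IsPerfectLE T n (T ⊗[R] M) := by
  induction n generalizing M with
  | zero =>
    obtain ⟨_, _⟩ := h
    exact ⟨inferInstance, inferInstance⟩
  | succ n ih =>
    obtain ⟨P, _, _, f, _, hproj, hf, hker⟩ := h
    obtain ⟨hK, hinj⟩ := hC f hproj hf hM
    refine ⟨T ⊗[R] P, _, _, f.baseChange T, inferInstance, inferInstance,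
      LinearMap.lTensor_surjective T hf, ?_⟩
    have hexact : Function.Exact ((LinearMap.ker f).subtype.baseChange T) (f.baseChange T) :=
      lTensor_exact T (LinearMap.exact_subtype_ker_map f) hf
    rw [LinearMap.exact_iff.mp hexact]
    exact (ih hK hker).of_linearEquiv (LinearEquiv.ofInjective _ hinj)

theorem Module.IsPerfect.baseChange_of_flat (T : Type u) [CommRing T] [Algebra R T]
    [Module.Flat R T] (h : Module.IsPerfect R M) : Module.IsPerfect T (T ⊗[R] M) :=
  h.imp fun _ h => h.baseChange_of_forall_ker (R := R) T (fun _ _ _ => True)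
    (fun f _ _ _ => ⟨trivial, Module.Flat.lTensor_preserves_injective_linearMap _
      (LinearMap.ker f).subtype_injective⟩) trivial

theorem one_tmul_eq_zero_iff (I : Ideal R) {M : Type*} [AddCommGroup M] [Module R M] (x : M) :
    (1 : R ⧸ I) ⊗ₜ[R] x = 0 ↔ x ∈ I • (⊤ : Submodule R M) := by
  rw [← Submodule.Quotient.mk_eq_zero, ← (quotTensorEquivQuotSMul M I).map_eq_zero_iff]
  simp

theorem baseChange_ker_subtype_injective_of_isSMulRegular {x : R} (hM : IsSMulRegular M x)
    (f : N →ₗ[R] M) :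
    Function.Injective ((LinearMap.ker f).subtype.baseChange (R ⧸ Ideal.span {x})) := by
  rw [injective_iff_map_eq_zero]
  intro z hz
  obtain ⟨k, rfl⟩ := TensorProduct.mk_surjective R (LinearMap.ker f) (R ⧸ Ideal.span {x})
    Ideal.Quotient.mk_surjective z
  have hk : (k : N) ∈ Ideal.span {x} • (⊤ : Submodule R N) := by
    simpa [one_tmul_eq_zero_iff] using hz
  rw [Submodule.ideal_span_singleton_smul] at hk
  obtain ⟨p, -, hp : x • p = k⟩ := hk
  have hfp : f p = 0 := hM.right_eq_zero_of_smul (by rw [← map_smul, hp, k.2])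
  obtain rfl : x • ⟨p, hfp⟩ = k := Subtype.ext hp
  refine (one_tmul_eq_zero_iff _ _).mpr (Submodule.smul_mem_smul ?_ trivial)
  exact Ideal.mem_span_singleton_self x

theorem Module.IsPerfect.quotient_of_isSMulRegular {x : R} (hR : IsSMulRegular R x)
    (hM : IsSMulRegular M x) (h : Module.IsPerfect R M) :
    Module.IsPerfect (R ⧸ Ideal.span {x}) ((R ⧸ Ideal.span {x}) ⊗[R] M) := by
  refine h.imp fun _ => .baseChange_of_forall_ker _ (fun X _ _ => IsSMulRegular X x) ?_ hM
  intro P X _ _ _ _ f _ _ hX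
  have hP : IsSMulRegular P x :=
    Module.Flat.isSMulRegular_of_isRegular (isLeftRegular_iff_isRegular.mp hR)
  exact ⟨hP.submodule _ _, baseChange_ker_subtype_injective_of_isSMulRegular hX f⟩

theorem flat_ker_of_surjective [Module.Flat R M] [Module.Flat R N] {f : N →ₗ[R] M}
    (hf : Function.Surjective f) : Module.Flat R (LinearMap.ker f) := by
  rw [Module.Flat.iff_rTensor_preserves_injective_linearMap]
  intro X Y _ _ _ _ g hg
  let ι := (LinearMap.ker f).subtype
  have hι : Function.Injective (ι.lTensor X) := LinearMap.lTensor_injective_of_exact_of_flat f hf _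
    (LinearMap.ker f).subtype_injective (LinearMap.exact_subtype_ker_map _) X
  have hcomm : g.rTensor N ∘ₗ ι.lTensor X = ι.lTensor Y ∘ₗ g.rTensor (LinearMap.ker f) := by
    ext; simp
  refine Function.Injective.of_comp (f := ι.lTensor Y) ?_
  rw [← LinearMap.coe_comp, ← hcomm, LinearMap.coe_comp]
  exact (Module.Flat.rTensor_preserves_injective_linearMap g hg).comp hι

theorem baseChange_ker_subtype_injective_of_isPushout {B k T : Type u} [CommRing B] [CommRing k]
    [CommRing T] [Algebra B k] [Algebra B R] [Algebra k T] [Algebra R T] [Algebra B T]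
    [IsScalarTower B k T] [IsScalarTower B R T] [Algebra.IsPushout B k R T]
    [Module B M] [IsScalarTower B R M] [Module.Flat B M] [Module B N] [IsScalarTower B R N]
    {f : N →ₗ[R] M} (hf : Function.Surjective f) :
    Function.Injective ((LinearMap.ker f).subtype.baseChange T) := by
  let ι := (LinearMap.ker f).subtype
  let eN := Algebra.IsPushout.cancelBaseChange B k R T N
  let eK := Algebra.IsPushout.cancelBaseChange B k R T (LinearMap.ker f)
  have hι : Function.Injective ((ι.restrictScalars B).lTensor k) :=
    LinearMap.lTensor_injective_of_exact_of_flat (f.restrictScalars B) hf (ι.restrictScalars B)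
      (LinearMap.ker f).subtype_injective (LinearMap.exact_subtype_ker_map f) k
  have hcomm (z) : ι.baseChange T (eK.symm z) =
      eN.symm ((ι.restrictScalars B).lTensor k z) := by
    induction z with
    | zero => simp only [map_zero]
    | add x y hx hy => simp only [map_add, hx, hy]
    | tmul c y => simp [eK, eN, Algebra.IsPushout.cancelBaseChange_symm_tmul]
  refine Function.Injective.of_comp_right (g := eK.symm) ?_ eK.symm.surjective
  rw [show ι.baseChange T ∘ eK.symm = eN.symm ∘ (ι.restrictScalars B).lTensor k from funext hcomm]
  exact eN.symm.injective.comp hι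

theorem Module.IsPerfect.baseChange_of_isPushout (B k : Type u) {T : Type u} [CommRing B]
    [CommRing k] [CommRing T] [Algebra B k] [Algebra B R] [Algebra k T] [Algebra R T] [Algebra B T]
    [IsScalarTower B k T] [IsScalarTower B R T] [Algebra.IsPushout B k R T] [Module.Flat B R]
    [Module B M] [IsScalarTower B R M] [Module.Flat B M] (h : Module.IsPerfect R M) :
    Module.IsPerfect T (T ⊗[R] M) := by
  refine h.imp fun _ h => h.baseChange_of_forall_ker T
    (fun X _ _ => ∃ (_ : Module B X) (_ : IsScalarTower B R X), Module.Flat B X) ?_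
    ⟨_, inferInstance, inferInstance⟩
  rintro P X _ _ _ _ f _ hf ⟨_, _, _⟩
  let _ : Module B P := Module.compHom P (algebraMap B R)
  have : IsScalarTower B R P := .of_algebraMap_smul fun _ _ => rfl
  have : Module.Flat B P := .trans B R P
  exact ⟨⟨_, inferInstance, flat_ker_of_surjective (f := f.restrictScalars B) hf⟩,
    baseChange_ker_subtype_injective_of_isPushout (B := B) (k := k) hf⟩

end IsPerfectLE

/-! ### Perfect residue fields -/

section PerfectResidueField

variable {T : Type u} [CommRing T] [IsLocalRing T]

theorem exists_ne_zero_forall_mem_maximalIdeal_mul_eq_zero [IsNoetherianRing T]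
    (hT : maximalIdeal T ∈ associatedPrimes T T) :
    ∃ s : T, s ≠ 0 ∧ ∀ a ∈ maximalIdeal T, a * s = 0 := by
  obtain ⟨hprime, s, hs⟩ := isAssociatedPrime_iff.mp hT
  refine ⟨s, ?_, fun a ha => ?_⟩
  · rintro rfl
    exact hprime.ne_top (hs.trans (by ext; simp [Submodule.mem_colon]))
  · rw [hs] at ha
    simpa [Submodule.mem_colon] using ha

theorem lTensor_residueField_subtype_injective [IsNoetherianRing T]
    (hT : maximalIdeal T ∈ associatedPrimes T T) {P : Type*} [AddCommGroup P] [Module T P]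
    (K : Submodule T P) [Module.Free T K] [Module.Finite T K] :
    Function.Injective (K.subtype.lTensor (ResidueField T)) := by
  obtain ⟨s, hs, hm⟩ := exists_ne_zero_forall_mem_maximalIdeal_mul_eq_zero hT
  rw [injective_iff_map_eq_zero]
  intro z hz
  obtain ⟨e, rfl⟩ := TensorProduct.mk_surjective T K (ResidueField T)
    Ideal.Quotient.mk_surjective z
  have he : (e : P) ∈ maximalIdeal T • (⊤ : Submodule T P) := by
    rw [← one_tmul_eq_zero_iff]
    exact hz
  have hse : s • e = 0 := by
    refine Subtype.ext (?_ : s • (e : P) = 0)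
    generalize (e : P) = p at he ⊢
    induction he using Submodule.smul_induction_on' with
    | smul a ha p _ => rw [smul_smul, mul_comm, hm a ha, zero_smul]
    | add p _ q _ hp hq => rw [smul_add, hp, hq, add_zero]
  let b := Module.Free.chooseBasis T K
  refine (one_tmul_eq_zero_iff _ _).mpr ?_
  rw [← b.sum_repr e]
  refine Submodule.sum_mem _ fun i _ => Submodule.smul_mem_smul ?_ trivial
  have hsi : s * b.repr e i = 0 := by simpa using congr(b.repr $hse i)
  rw [mem_maximalIdeal]
  exact fun hu => hs (hu.mul_left_eq_zero.mp hsi)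

/- Over a local ring of depth zero a minimal free resolution of finite length has length zero. -/
theorem Module.IsPerfectLE.free_and_finite_of_maximalIdeal_mem_associatedPrimes [IsNoetherianRing T]
    (hT : maximalIdeal T ∈ associatedPrimes T T) {M : Type u} [AddCommGroup M] [Module T M]
    {n : ℕ} (h : Module.IsPerfectLE T n M) : Module.Free T M ∧ Module.Finite T M := by
  induction n generalizing M with
  | zero =>
    obtain ⟨_, _⟩ := h
    exact ⟨Module.free_of_flat_of_isLocalRing, inferInstance⟩
  | succ n ih =>
    obtain ⟨P, _, _, f, _, _, hf, hker⟩ := h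
    obtain ⟨_, _⟩ := ih hker
    have : Module.Free T P := Module.free_of_flat_of_isLocalRing
    exact ⟨Module.free_of_lTensor_residueField_injective (LinearMap.ker f).subtype f hf
      (LinearMap.exact_subtype_ker_map f) (lTensor_residueField_subtype_injective hT _),
      .of_surjective f hf⟩

theorem maximalIdeal_eq_bot_of_isPerfect_residueField [IsNoetherianRing T]
    (hT : maximalIdeal T ∈ associatedPrimes T T) (h : Module.IsPerfect T (ResidueField T)) :
    maximalIdeal T = ⊥ := by
  obtain ⟨n, h⟩ := h
  have := (h.free_and_finite_of_maximalIdeal_mem_associatedPrimes hT).1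
  have hann : Module.annihilator T (ResidueField T) = maximalIdeal T := Ideal.annihilator_quotient
  rw [← hann, Module.annihilator_eq_bot]
  infer_instance

theorem exists_isSMulRegular_notMem_maximalIdeal_sq [IsNoetherianRing T]
    (hT : maximalIdeal T ∉ associatedPrimes T T) :
    ∃ x ∈ maximalIdeal T, x ∉ maximalIdeal T ^ 2 ∧ IsSMulRegular T x := by
  by_contra! H
  have hfin := associatedPrimes.finite T T
  have hcover : (maximalIdeal T : Set T) ⊆ (maximalIdeal T ^ 2 : Ideal T) ∪
      (maximalIdeal T ^ 2 : Ideal T) ∪ ⋃ p ∈ (hfin.toFinset : Set (Ideal T)), (p : Set T) := by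
    intro x hx
    rw [Set.union_self, Set.Finite.coe_toFinset, biUnion_associatedPrimes_eq_compl_nonZeroDivisors]
    refine or_iff_not_imp_left.mpr fun hx2 hreg => H x hx hx2 ?_
    exact isLeftRegular_iff_right_eq_zero_of_mul.mpr (mem_nonZeroDivisors_iff.mp hreg).1
  have hprime (p) (hp : p ∈ hfin.toFinset) : p.IsPrime :=
    IsAssociatedPrime.isPrime (M := T) (hfin.mem_toFinset.mp hp)
  rw [Ideal.subset_union_prime' (f := fun p : Ideal T => p) (a := maximalIdeal T ^ 2)
    (b := maximalIdeal T ^ 2) hprime, ← or_assoc, or_self] at hcover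
  rcases hcover with hsq | ⟨p, hp, hle⟩
  · have hbot : maximalIdeal T = ⊥ := by
      refine Submodule.eq_bot_of_le_smul_of_le_jacobson_bot (maximalIdeal T) _
        (IsNoetherian.noetherian _) ?_ (maximalIdeal_le_jacobson _)
      rwa [smul_eq_mul, ← pow_two]
    refine hT (isAssociatedPrime_iff.mpr ⟨inferInstance, 1, ?_⟩)
    rw [hbot]
    ext a
    simp [Submodule.mem_colon]
  · have hp := hfin.mem_toFinset.mp hp
    have hmax := (maximalIdeal.isMaximal T).eq_of_le (IsAssociatedPrime.isPrime hp).ne_top hle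
    exact hT (hmax ▸ hp)

theorem exists_linearMap_residueField_eq_one {x : T} (hx : x ∈ maximalIdeal T)
    (hx2 : x ∉ maximalIdeal T ^ 2) :
    ∃ l : maximalIdeal T →ₗ[T] ResidueField T, l ⟨x, hx⟩ = 1 := by
  have hne : (maximalIdeal T).toCotangent ⟨x, hx⟩ ≠ 0 := by
    rwa [Ne, Ideal.toCotangent_eq_zero]
  obtain ⟨g, hg⟩ :=
    Module.Projective.exists_dual_eq_one (ResidueField T) (V := CotangentSpace T) hne
  exact ⟨g.restrictScalars T ∘ₗ (maximalIdeal T).toCotangent, hg⟩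

theorem Module.IsPerfect.maximalIdeal [IsNoetherianRing T]
    (h : Module.IsPerfect T (ResidueField T)) : Module.IsPerfect T (maximalIdeal T) :=
  (h.ker_of_projective (f := (IsLocalRing.maximalIdeal T).mkQ)
    (Submodule.mkQ_surjective _)).of_linearEquiv (.ofEq _ _ (Submodule.ker_mkQ _))

/- With `Q = T ⧸ (x)`, multiplication by `x` and a functional on the cotangent space which is `1` on
`x` exhibit the residue field as a direct summand of `Q ⊗ 𝔪`. -/
theorem Module.IsPerfect.residueField_quotient [IsNoetherianRing T] {x : T}
    (hx : x ∈ IsLocalRing.maximalIdeal T) (hx2 : x ∉ IsLocalRing.maximalIdeal T ^ 2)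
    (hreg : IsSMulRegular T x) (h : Module.IsPerfect T (ResidueField T))
    [IsLocalRing (T ⧸ Ideal.span {x})] :
    Module.IsPerfect (T ⧸ Ideal.span {x}) (ResidueField (T ⧸ Ideal.span {x})) := by
  have hperf := h.maximalIdeal.quotient_of_isSMulRegular hreg (hreg.submodule _ _)
  set Q := T ⧸ Ideal.span {x}
  set 𝔪 := IsLocalRing.maximalIdeal T
  have : IsLocalHom (algebraMap T Q) := .of_surjective _ Ideal.Quotient.mk_surjective
  have hannihilate : ∀ q ∈ IsLocalRing.maximalIdeal Q, q • (1 : Q) ⊗ₜ[T] (⟨x, hx⟩ : 𝔪) = 0 := by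
    intro q hq
    obtain ⟨t, rfl⟩ := Ideal.Quotient.mk_surjective q
    have ht : t ∈ 𝔪 := fun hu => hq (hu.map _)
    have hxQ : x • (1 : Q) = 0 := by
      rw [Algebra.smul_def, mul_one]
      exact Ideal.Quotient.eq_zero_iff_mem.mpr (Ideal.mem_span_singleton_self x)
    calc (Ideal.Quotient.mk _ t) • (1 : Q) ⊗ₜ[T] (⟨x, hx⟩ : 𝔪)
        = t • (1 : Q) ⊗ₜ[T] (⟨x, hx⟩ : 𝔪) := algebraMap_smul Q t _
      _ = 1 ⊗ₜ (x • ⟨t, ht⟩) := by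
        rw [← TensorProduct.tmul_smul]
        exact congrArg _ (Subtype.ext (mul_comm t x))
      _ = 0 := by rw [← TensorProduct.smul_tmul, hxQ, TensorProduct.zero_tmul]
  obtain ⟨l, hl⟩ := exists_linearMap_residueField_eq_one hx hx2
  let i : ResidueField Q →ₗ[Q] Q ⊗[T] 𝔪 :=
    Submodule.liftQ _ (LinearMap.toSpanSingleton Q _ (1 ⊗ₜ ⟨x, hx⟩)) hannihilate
  let r : Q ⊗[T] 𝔪 →ₗ[Q] ResidueField Q := LinearMap.liftBaseChange Q
    ((Algebra.linearMap (ResidueField T) (ResidueField Q)).restrictScalars T ∘ₗ l)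
  refine hperf.of_retract i r (LinearMap.ext fun y => ?_)
  obtain ⟨q, rfl⟩ := residue_surjective y
  change r (q • 1 ⊗ₜ ⟨x, hx⟩) = residue Q q
  simp only [r, map_smul, LinearMap.liftBaseChange_tmul, LinearMap.comp_apply, hl, one_smul]
  simp [Algebra.smul_def]
  rfl

end PerfectResidueField

theorem inf_le_mul_of_sup_span_singleton {R : Type*} [CommRing R] {I J 𝔫 : Ideal R} {y : R}
    (hy : y ∈ 𝔫) (hreg : ∀ a, y * a ∈ J → a ∈ J)
    (h : (J ⊔ Ideal.span {y}) ⊓ I ≤ 𝔫 * (J ⊔ Ideal.span {y})) : J ⊓ I ≤ 𝔫 * J := by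
  rintro f ⟨hfJ, hfI⟩
  have hf := h ⟨Ideal.mem_sup_left hfJ, hfI⟩
  rw [Ideal.mul_sup, Submodule.mem_sup] at hf
  obtain ⟨g, hg, z, hz, rfl⟩ := hf
  rw [mul_comm, Ideal.mem_span_singleton_mul] at hz
  obtain ⟨a, -, rfl⟩ := hz
  have ha : a ∈ J := hreg a ((J.add_mem_iff_right (Ideal.mul_le_right hg)).mp hfJ)
  exact add_mem hg (Ideal.mul_mem_mul hy ha)

/- If `T` has depth zero it is a field; otherwise divide by a regular `x ∈ 𝔪 ∖ 𝔪²`, which enlarges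
the kernel. -/
theorem ker_inf_maximalIdeal_sq_le {P T : Type u} [CommRing P] [IsLocalRing P] [IsNoetherianRing P]
    [CommRing T] [IsLocalRing T] {φ : P →+* T} (hφ : Function.Surjective φ)
    (h : Module.IsPerfect T (ResidueField T)) :
    RingHom.ker φ ⊓ maximalIdeal P ^ 2 ≤ maximalIdeal P * RingHom.ker φ := by
  induction hJ : RingHom.ker φ using IsNoetherian.induction generalizing T with
  | hgt J ih =>
  subst hJ
  have : IsNoetherianRing T := isNoetherianRing_of_surjective P T φ hφ
  have : IsLocalHom φ := .of_surjective φ hφ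
  by_cases hT : maximalIdeal T ∈ associatedPrimes T T
  · have hker : RingHom.ker φ = maximalIdeal P := by
      rw [← maximalIdeal_comap φ, maximalIdeal_eq_bot_of_isPerfect_residueField hT h]
      rfl
    rw [hker, pow_two]
    exact inf_le_right
  · obtain ⟨x, hx, hx2, hreg⟩ := exists_isSMulRegular_notMem_maximalIdeal_sq hT
    obtain ⟨y, rfl⟩ := hφ x
    let mk := Ideal.Quotient.mk (Ideal.span {φ y})
    have : Nontrivial (T ⧸ Ideal.span {φ y}) :=
      Ideal.Quotient.nontrivial_iff.mpr (mt Ideal.span_singleton_eq_top.mp hx)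
    have : IsLocalRing (T ⧸ Ideal.span {φ y}) := .of_surjective' mk Ideal.Quotient.mk_surjective
    have hker : RingHom.ker (mk.comp φ) = RingHom.ker φ ⊔ Ideal.span {y} := by
      rw [← RingHom.comap_ker, Ideal.mk_ker, ← Set.image_singleton, ← Ideal.map_span,
        Ideal.comap_map_of_surjective' _ hφ, sup_comm]
    have hlt : RingHom.ker φ < RingHom.ker φ ⊔ Ideal.span {y} := by
      rw [left_lt_sup, Ideal.span_singleton_le_iff_mem, RingHom.mem_ker]
      exact fun h0 => hx2 (h0 ▸ zero_mem _)
    refine inf_le_mul_of_sup_span_singleton (y := y) ?_ (fun a ha => ?_)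
      (ih _ hlt (φ := mk.comp φ) (Ideal.Quotient.mk_surjective.comp hφ)
        (h.residueField_quotient hx hx2 hreg) hker)
    · rwa [← maximalIdeal_comap φ]
    · rw [RingHom.mem_ker, map_mul] at ha
      exact hreg.right_eq_zero_of_smul ha

theorem Module.IsPerfect.quotient_map {R : Type u} (T : Type u) [CommRing R] [CommRing T]
    [Algebra R T] [Module.Flat R T] {I : Ideal R} (h : Module.IsPerfect R (R ⧸ I)) :
    Module.IsPerfect T (T ⧸ I.map (algebraMap R T)) :=
  (h.baseChange_of_flat T).of_linearEquiv
    (Algebra.TensorProduct.quotIdealMapEquivTensorQuot T I).symm.toLinearEquiv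

theorem ker_inf_comap_sq_le {P T : Type u} [CommRing P] [IsNoetherianRing P] [CommRing T]
    {φ : P →+* T} (hφ : Function.Surjective φ) (𝔪 : Ideal T) [𝔪.IsMaximal]
    (h : Module.IsPerfect T (T ⧸ 𝔪)) :
    RingHom.ker φ ⊓ 𝔪.comap φ ^ 2 ≤ 𝔪.comap φ * RingHom.ker φ := by
  set 𝔫 := 𝔪.comap φ with h𝔫
  have : 𝔫.IsMaximal := Ideal.comap_isMaximal_of_surjective φ hφ
  have hker : RingHom.ker (Localization.localRingHom 𝔫 𝔪 φ h𝔫) =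
      (RingHom.ker φ).map (algebraMap P (Localization.AtPrime 𝔫)) :=
    IsLocalization.ker_map (Localization.AtPrime 𝔪) φ <|
      SetLike.coe_injective (Set.image_preimage_eq (𝔪.primeCompl : Set T) hφ)
  have hperf := h.quotient_map (Localization.AtPrime 𝔪)
  rw [Localization.AtPrime.map_eq_maximalIdeal] at hperf
  have hloc := ker_inf_maximalIdeal_sq_le
    (RingHom.surjective_localRingHom_of_surjective φ hφ 𝔪) hperf
  rw [hker, ← Localization.AtPrime.map_eq_maximalIdeal, ← Ideal.map_pow, ← Ideal.map_mul] at hloc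
  rintro f ⟨hfker, hf⟩
  obtain ⟨s, hs, hsf⟩ := (IsLocalization.algebraMap_mem_map_algebraMap_iff 𝔫.primeCompl _ _ f).mp
    (hloc ⟨Ideal.mem_map_of_mem _ hfker, Ideal.mem_map_of_mem _ hf⟩)
  obtain ⟨a, m, hm, has⟩ := ‹𝔫.IsMaximal›.exists_inv hs
  have hf_eq : f = a * (s * f) + m * f := by rw [← mul_assoc, ← add_mul, has, one_mul]
  rw [hf_eq]
  exact add_mem (Ideal.mul_mem_left _ a hsf) (Ideal.mul_mem_mul hm hfker)

/-! ### Homological smoothness -/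

section IsHomologicallySmooth

variable (A B S k : Type u) [CommRing A] [CommRing B] [CommRing S] [CommRing k]
  [Algebra A B] [Algebra A S] [Algebra A k] [Algebra B S] [Algebra B k] [Algebra S k]
  [IsScalarTower A B S] [IsScalarTower A B k] [IsScalarTower A S k] [IsScalarTower B S k]

/-- `B` is homologically smooth over `A`: it is perfect over its enveloping ring. Here `B` is
encoded as the quotient of `B ⊗[A] B` by the kernel of multiplication. -/
def IsHomologicallySmooth : Prop :=
  Module.IsPerfect (B ⊗[A] B) (B ⊗[A] B ⧸ KaehlerDifferential.ideal A B)

/-- The rational point `k ⊗[A] B → k` of the base change `k ⊗[A] B` given by a `B`-algebra `k`. -/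
abbrev rationalPoint : k ⊗[A] B →ₐ[k] k :=
  Algebra.TensorProduct.productLeftAlgHom (AlgHom.id k k) (IsScalarTower.toAlgHom A B k)

theorem ker_rationalPoint_eq_span :
    RingHom.ker (rationalPoint A B k) =
      Ideal.span (Set.range fun b : B => 1 ⊗ₜ[A] b - algebraMap B k b ⊗ₜ 1) := by
  set J := Ideal.span (Set.range fun b : B => (1 : k) ⊗ₜ[A] b - algebraMap B k b ⊗ₜ 1)
  refine le_antisymm (fun x hx => ?_) ?_
  · have hmk : (Algebra.ofId k (k ⊗[A] B ⧸ J)).comp (rationalPoint A B k) =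
        Ideal.Quotient.mkₐ k J := by
      refine Algebra.TensorProduct.ext (by ext) (AlgHom.ext fun b => ?_)
      have hb := Ideal.Quotient.eq.mpr (Ideal.subset_span ⟨b, rfl⟩ :
        (1 : k) ⊗ₜ[A] b - algebraMap B k b ⊗ₜ 1 ∈ J)
      change Ideal.Quotient.mk J (algebraMap k (k ⊗[A] B) (rationalPoint A B k (1 ⊗ₜ b))) =
        Ideal.Quotient.mk J (1 ⊗ₜ b)
      simpa using hb.symm
    rw [← Ideal.Quotient.eq_zero_iff_mem]
    have hx : rationalPoint A B k x = 0 := hx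
    simpa [hx] using congr($hmk x).symm
  · rw [Ideal.span_le]
    rintro _ ⟨b, rfl⟩
    simp [RingHom.mem_ker]

theorem map_ideal_eq_ker_rationalPoint :
    (KaehlerDifferential.ideal A B).map
      (Algebra.TensorProduct.map (IsScalarTower.toAlgHom A B k) (AlgHom.id A B)) =
      RingHom.ker (rationalPoint A B k) := by
  rw [← KaehlerDifferential.span_range_eq_ideal, Ideal.map_span, ← Set.range_comp,
    ker_rationalPoint_eq_span]
  congr! with b
  simp

variable {B} in
theorem map_ker_rationalPoint_of_isLocalization (M : Submonoid B) [IsLocalization M S] :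
    (RingHom.ker (rationalPoint A B k)).map
      (Algebra.TensorProduct.map (AlgHom.id k k) (IsScalarTower.toAlgHom A B S)) =
      RingHom.ker (rationalPoint A S k) := by
  rw [ker_rationalPoint_eq_span, Ideal.map_span, ← Set.range_comp, ker_rationalPoint_eq_span]
  refine le_antisymm (Ideal.span_mono ?_) (Ideal.span_le.mpr ?_)
  · rintro _ ⟨b, rfl⟩
    exact ⟨algebraMap B S b, by simp [← IsScalarTower.algebraMap_apply]⟩
  · rintro _ ⟨s, rfl⟩
    set J : Ideal (k ⊗[A] S) := Ideal.span _
    have hring : (Ideal.Quotient.mk J).comp Algebra.TensorProduct.includeRight.toRingHom =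
        (Ideal.Quotient.mk J).comp
          ((algebraMap k (k ⊗[A] S)).comp (algebraMap S k)) := by
      refine IsLocalization.ringHom_ext M (RingHom.ext fun b => Ideal.Quotient.eq.mpr ?_)
      refine Ideal.subset_span ⟨b, ?_⟩
      simp [← IsScalarTower.algebraMap_apply]
    exact Ideal.Quotient.eq.mp congr($hring s)

variable {A B}

theorem IsHomologicallySmooth.isPerfect_ker_rationalPoint [Module.Flat A B]
    (h : IsHomologicallySmooth A B) :
    Module.IsPerfect (k ⊗[A] B) (k ⊗[A] B ⧸ RingHom.ker (rationalPoint A B k)) := by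
  let ρ : B ⊗[A] B →ₐ[B] k ⊗[A] B :=
    Algebra.TensorProduct.map (Algebra.ofId B k) (AlgHom.id A B)
  let _ : Algebra (B ⊗[A] B) (k ⊗[A] B) := ρ.toAlgebra
  have : IsScalarTower B (B ⊗[A] B) (k ⊗[A] B) := .of_algHom ρ
  have : Algebra.IsPushout B k (B ⊗[A] B) (k ⊗[A] B) :=
    .tensorProduct_tensorProduct A B B k (by ext; simp [RingHom.algebraMap_toAlgebra, ρ])
  let μ := Algebra.TensorProduct.lmul'' A (S := B)
  have hμ : Function.Surjective μ := fun b => ⟨b ⊗ₜ 1, mul_one b⟩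
  have : Module.Flat B (B ⊗[A] B ⧸ KaehlerDifferential.ideal A B) :=
    .of_linearEquiv (Ideal.quotientKerAlgEquivOfSurjective hμ).toLinearEquiv
  rw [← map_ideal_eq_ker_rationalPoint]
  exact (Module.IsPerfect.baseChange_of_isPushout B k (T := k ⊗[A] B) h).of_linearEquiv
    (Algebra.TensorProduct.quotIdealMapEquivTensorQuot (k ⊗[A] B)
      (KaehlerDifferential.ideal A B)).symm.toLinearEquiv

theorem IsHomologicallySmooth.isPerfect_ker_rationalPoint_of_isLocalization [Module.Flat A B]
    (M : Submonoid B) [IsLocalization M S] (h : IsHomologicallySmooth A B) :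
    Module.IsPerfect (k ⊗[A] S) (k ⊗[A] S ⧸ RingHom.ker (rationalPoint A S k)) := by
  let α := Algebra.TensorProduct.map (AlgHom.id k k) (IsScalarTower.toAlgHom A B S)
  let _ : Algebra (k ⊗[A] B) (k ⊗[A] S) := α.toAlgebra
  have : Module.Flat B S := IsLocalization.flat S M
  have : Module.Flat (k ⊗[A] B) (k ⊗[A] S) := RingHom.Flat.tensorProductMap (f := AlgHom.id k k)
    (g := IsScalarTower.toAlgHom A B S) (.of_bijective Function.bijective_id)
    (RingHom.flat_algebraMap_iff.mpr this)
  rw [← map_ker_rationalPoint_of_isLocalization A S k M]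
  exact (h.isPerfect_ker_rationalPoint k).quotient_map (k ⊗[A] S)

end IsHomologicallySmooth

/-! ### Homologically smooth algebras are smooth -/

theorem mem_ker_sq_of_one_tmul_D_eq_zero {k R : Type*} [CommRing k] [CommRing R] [Algebra k R]
    [Algebra.FormallySmooth k R] [Algebra R k] [IsScalarTower k R k] {x : R}
    (hx : algebraMap R k x = 0) (hD : (1 : k) ⊗ₜ[R] KaehlerDifferential.D k R x = 0) :
    x ∈ RingHom.ker (algebraMap R k) ^ 2 := by
  have hsurj : Function.Surjective (algebraMap R k) := fun c =>
    ⟨algebraMap k R c, (IsScalarTower.algebraMap_apply k R k c).symm⟩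
  obtain ⟨l, hl⟩ := (Algebra.FormallySmooth.iff_split_injection (R := k) hsurj).mp inferInstance
  have hcot := congr($hl ((RingHom.ker (algebraMap R k)).toCotangent ⟨x, hx⟩))
  simp only [LinearMap.comp_apply, KaehlerDifferential.kerCotangentToTensor_toCotangent, hD,
    map_zero, LinearMap.id_apply] at hcot
  exact (Ideal.toCotangent_eq_zero _ _).mp hcot.symm

theorem one_tmul_D_algebraMap_eq_zero {A P k R K : Type*} [CommRing A] [CommRing P] [CommRing k]
    [CommRing R] [CommRing K] [Algebra A P] [Algebra A k] [Algebra k R] [Algebra P R] [Algebra A R]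
    [IsScalarTower A k R] [IsScalarTower A P R] [Algebra P K] [Algebra R K] [IsScalarTower P R K]
    {f : P} (hD : (1 : K) ⊗ₜ[P] KaehlerDifferential.D A P f = 0) :
    (1 : K) ⊗ₜ[R] KaehlerDifferential.D k R (algebraMap P R f) = 0 := by
  have : SMulCommClass k P R := ⟨fun c p r => by
    rw [Algebra.smul_def c, Algebra.smul_def p, Algebra.smul_def p, Algebra.smul_def c,
      mul_left_comm]⟩
  let d : K ⊗[P] Ω[P⁄A] →ₗ[K] K ⊗[R] Ω[R⁄k] :=
    (((TensorProduct.mk R K Ω[R⁄k] 1).restrictScalars P).comp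
      (KaehlerDifferential.map A k P R)).liftBaseChange K
  have hd := congr(d $hD)
  rw [LinearMap.liftBaseChange_tmul, map_zero, one_smul] at hd
  simpa using hd

theorem one_tmul_eq_zero_of_mem_ker_smul_top {R k M : Type*} [CommRing R] [CommRing k]
    [Algebra R k] [AddCommGroup M] [Module R M] {x : M}
    (hx : x ∈ RingHom.ker (algebraMap R k) • (⊤ : Submodule R M)) : (1 : k) ⊗ₜ[R] x = 0 := by
  induction hx using Submodule.smul_induction_on' with
  | smul a ha y _ =>
    rw [← TensorProduct.smul_tmul, Algebra.smul_def, (ha : algebraMap R k a = 0), zero_mul,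
      TensorProduct.zero_tmul]
  | add y _ z _ hy hz => rw [TensorProduct.tmul_add, hy, hz, add_zero]

theorem one_tmul_eq_zero_of_one_tmul_mem_ker_smul_top {P R k M : Type*} [CommRing P] [CommRing R]
    [CommRing k] [Algebra P R] [Algebra P k] [Algebra R k] [IsScalarTower P R k] [AddCommGroup M]
    [Module P M] {x : M}
    (hx : (1 : R) ⊗ₜ[P] x ∈ RingHom.ker (algebraMap R k) • (⊤ : Submodule R (R ⊗[P] M))) :
    (1 : k) ⊗ₜ[P] x = 0 := by
  simpa using congr(AlgebraTensorModule.cancelBaseChange P R k k M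
    $(one_tmul_eq_zero_of_mem_ker_smul_top hx))

section Jacobian

variable (A P S k : Type u) [CommRing A] [CommRing P] [CommRing S] [CommRing k]
  [Algebra A P] [Algebra A S] [Algebra A k] [Algebra P S] [Algebra P k]
  [IsScalarTower A P S] [IsScalarTower A P k]

variable {P k} in
theorem one_tmul_mem_ker_rationalPoint_sq [Algebra.FormallySmooth A P] {f : P}
    (hf : algebraMap P k f = 0) (hD : (1 : k) ⊗ₜ[P] KaehlerDifferential.D A P f = 0) :
    (1 : k) ⊗ₜ[A] f ∈ RingHom.ker (rationalPoint A P k) ^ 2 := by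
  -- `P` also acts on `k ⊗[A] P` through `k`: these instances select the right factor.
  let _ : Algebra P (k ⊗[A] P) := Algebra.TensorProduct.rightAlgebra
  let _ : SMul P (k ⊗[A] P) := Algebra.TensorProduct.rightAlgebra.toSMul
  let _ : Algebra (k ⊗[A] P) k := (rationalPoint A P k).toRingHom.toAlgebra
  have : IsScalarTower k (k ⊗[A] P) k :=
    .of_algebraMap_eq' (rationalPoint A P k).comp_algebraMap.symm
  have : IsScalarTower P (k ⊗[A] P) k := .of_algebraMap_eq fun p => by
    simp [RingHom.algebraMap_toAlgebra]
  have : IsScalarTower A P (k ⊗[A] P) := .of_algebraMap_eq fun a => by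
    simp [RingHom.algebraMap_toAlgebra, Algebra.TensorProduct.algebraMap_apply]
  have hD' : (1 : k) ⊗ₜ[k ⊗[A] P] KaehlerDifferential.D k (k ⊗[A] P) (algebraMap P _ f) = 0 :=
    one_tmul_D_algebraMap_eq_zero hD
  exact mem_ker_sq_of_one_tmul_D_eq_zero (by simpa [RingHom.algebraMap_toAlgebra] using hf) hD'

variable {A P S k} in
theorem one_tmul_eq_zero_of_one_tmul_mem_mul [Module.Flat A S]
    (h₁ : Function.Surjective (algebraMap P S)) (f : RingHom.ker (algebraMap P S))
    (hf : (1 : k) ⊗ₜ[A] (f : P) ∈ RingHom.ker (rationalPoint A P k) *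
      RingHom.ker (Algebra.TensorProduct.map (.id k k) (IsScalarTower.toAlgHom A P S))) :
    (1 : k) ⊗ₜ[P] f = 0 := by
  let _ : Algebra P (k ⊗[A] P) := Algebra.TensorProduct.rightAlgebra
  let _ : SMul P (k ⊗[A] P) := Algebra.TensorProduct.rightAlgebra.toSMul
  let _ : Module P (k ⊗[A] P) := Algebra.toModule
  let _ : Algebra (k ⊗[A] P) k := (rationalPoint A P k).toRingHom.toAlgebra
  have : IsScalarTower P (k ⊗[A] P) k := .of_algebraMap_eq fun p => by
    simp [RingHom.algebraMap_toAlgebra]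
  let e := Algebra.kerTensorProductMapIdToAlgHomEquiv A P S k h₁
  have hsymm : e.symm (1 ⊗ₜ f) ∈ RingHom.ker (algebraMap (k ⊗[A] P) k) •
      (⊤ : Submodule (k ⊗[A] P) _) := by
    rw [Submodule.mem_smul_top_iff]
    have hker : RingHom.ker (algebraMap (k ⊗[A] P) k) = RingHom.ker (rationalPoint A P k) := rfl
    simpa [Algebra.TensorProduct.one_def, e, hker] using hf
  have he := Submodule.mem_map_of_mem (f := e.toLinearMap) hsymm
  rw [Submodule.map_smul'', Submodule.map_top, LinearEquiv.range, LinearEquiv.coe_coe,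
    LinearEquiv.apply_symm_apply] at he
  exact one_tmul_eq_zero_of_one_tmul_mem_ker_smul_top he

theorem comap_ker_rationalPoint [Algebra S k] [IsScalarTower A S k] [IsScalarTower P S k] :
    (RingHom.ker (rationalPoint A S k)).comap
      (Algebra.TensorProduct.map (.id k k) (IsScalarTower.toAlgHom A P S)).toRingHom =
      RingHom.ker (rationalPoint A P k) := by
  have hcomp : (rationalPoint A S k).comp
      (Algebra.TensorProduct.map (.id k k) (IsScalarTower.toAlgHom A P S)) =
      rationalPoint A P k := by
    ext p
    simp [← IsScalarTower.algebraMap_apply]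
  rw [← hcomp]
  rfl

/- By the Jacobian criterion it suffices that `f ∈ J = ker (P → S)` lies in the kernel of
`J → k ⊗[P] J` once `1 ⊗ D f = 0`. The latter says that `1 ⊗ f` lies in the square of the
maximal ideal `𝔫` of the rational point of `k ⊗[A] P`, hence in `𝔫` times the kernel of
`k ⊗[A] P → k ⊗[A] S`, which is the base change of `J`. -/
theorem formallySmooth_of_isPerfect_ker_rationalPoint [IsLocalRing S] [Module.Flat A S]
    [Algebra.FormallySmooth A P] [Algebra.EssFiniteType A P] [IsNoetherianRing P]
    [Module.Free P Ω[P⁄A]] [Module.Finite P Ω[P⁄A]]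
    (h₁ : Function.Surjective (algebraMap P S))
    (h : Module.IsPerfect (ResidueField S ⊗[A] S)
      (ResidueField S ⊗[A] S ⧸ RingHom.ker (rationalPoint A S (ResidueField S)))) :
    Algebra.FormallySmooth A S := by
  rw [Algebra.FormallySmooth.iff_injective_cotangentComplexBaseChange_residueField P h₁
    (IsNoetherian.noetherian _), injective_iff_map_eq_zero]
  intro z hz
  set k := ResidueField S
  have hPk : Function.Surjective (algebraMap P k) := by
    rw [IsScalarTower.algebraMap_eq P S k]
    exact (residue_surjective (R := S)).comp h₁
  obtain ⟨f, rfl⟩ := TensorProduct.mk_surjective P (RingHom.ker (algebraMap P S)) k hPk z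
  have hfS : algebraMap P S f = 0 := f.2
  have hfk : algebraMap P k f = 0 := by
    rw [IsScalarTower.algebraMap_apply P S k, hfS, map_zero]
  have hD : (1 : k) ⊗ₜ[P] KaehlerDifferential.D A P f = 0 := by
    simpa [KaehlerDifferential.cotangentComplexBaseChange_tmul] using hz
  let φ := Algebra.TensorProduct.map (.id k k) (IsScalarTower.toAlgHom A P S)
  have hφ : Function.Surjective φ := LinearMap.lTensor_surjective _ h₁
  have : IsNoetherianRing (k ⊗[A] P) := Algebra.EssFiniteType.isNoetherianRing k _
  have : (RingHom.ker (rationalPoint A S k)).IsMaximal :=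
    RingHom.ker_isMaximal_of_surjective _ fun c => ⟨c ⊗ₜ 1, by simp⟩
  have hle := ker_inf_comap_sq_le (φ := φ.toRingHom) hφ _ h
  rw [comap_ker_rationalPoint] at hle
  exact one_tmul_eq_zero_of_one_tmul_mem_mul h₁ f <|
    hle ⟨by simp [φ, hfS], one_tmul_mem_ker_rationalPoint_sq A hfk hD⟩

end Jacobian

theorem exists_formallySmooth_presentation (A S : Type u) [CommRing A] [CommRing S] [Algebra A S]
    [Algebra.EssFiniteType A S] :
    ∃ (P : Type u) (_ : CommRing P) (_ : Algebra A P), Algebra.FormallySmooth A P ∧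
      Algebra.EssFiniteType A P ∧ Module.Flat A P ∧ Module.Free P Ω[P⁄A] ∧
      ∃ f : P →ₐ[A] S, Function.Surjective f := by
  let S₀ := Algebra.EssFiniteType.subalgebra A S
  let M := Algebra.EssFiniteType.submonoid A S
  obtain ⟨n, π, hπ⟩ := Algebra.FiniteType.iff_quotient_mvPolynomial''.mp
    (inferInstance : Algebra.FiniteType A S₀)
  let X := MvPolynomial (Fin n) A
  let P := Localization (M.comap π)
  let f : P →ₐ[A] S := IsLocalization.liftAlgHom (M := M.comap π)
    (f := (IsScalarTower.toAlgHom A S₀ S).comp π) fun x =>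
      IsLocalization.map_units (M := M) S ⟨π x.1, x.2⟩
  have hf : Function.Surjective f := by
    intro s
    obtain ⟨x, ⟨t, ht⟩, rfl⟩ := IsLocalization.exists_mk'_eq M s
    obtain ⟨x, rfl⟩ := hπ x
    obtain ⟨t, rfl⟩ := hπ t
    exact ⟨IsLocalization.mk' (M := M.comap π) _ x ⟨t, ht⟩,
      (IsLocalization.lift_mk'_spec _ _ _ _).mpr
        (IsLocalization.mk'_spec' S (π x) (⟨π t, ht⟩ : M)).symm⟩
  have : Algebra.FormallyEtale X P := .of_isLocalization (M.comap π)
  have : Algebra.EssFiniteType X P := .of_isLocalization _ (M.comap π)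
  have : Module.Flat X P := IsLocalization.flat _ (M.comap π)
  exact ⟨P, inferInstance, inferInstance, .comp _ X _, .comp _ X _, .trans _ X _,
    .of_equiv (KaehlerDifferential.tensorKaehlerEquivOfFormallyEtale A X P), f, hf⟩

theorem formallySmooth_of_forall_atPrime {A B : Type u} [CommRing A] [CommRing B] [Algebra A B]
    [IsNoetherianRing A] [Algebra.EssFiniteType A B]
    (h : ∀ (q : Ideal B) [q.IsPrime], Algebra.FormallySmooth A (Localization.AtPrime q)) :
    Algebra.FormallySmooth A B := by
  have : IsNoetherianRing B := Algebra.EssFiniteType.isNoetherianRing A B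
  have hlocus : Algebra.smoothLocus A B = Set.univ :=
    Set.eq_univ_of_forall fun p => h p.asIdeal
  rw [Algebra.smoothLocus_eq_compl_support_inter, ← Set.univ_subset_iff, Set.subset_inter_iff,
    Set.univ_subset_iff, Set.univ_subset_iff, Set.compl_univ_iff,
    Module.support_eq_empty_iff] at hlocus
  have : Module.FinitePresentation B Ω[B⁄A] := Module.finitePresentation_of_finite _ _
  exact (Algebra.formallySmooth_iff _ _).mpr
    ⟨Module.freeLocus_eq_univ_iff.mp hlocus.2, hlocus.1⟩

theorem IsHomologicallySmooth.formallySmooth {A B : Type u} [CommRing A] [CommRing B]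
    [Algebra A B] [IsNoetherianRing A] [Algebra.EssFiniteType A B] [Module.Flat A B]
    (h : IsHomologicallySmooth A B) : Algebra.FormallySmooth A B := by
  refine formallySmooth_of_forall_atPrime fun q hq => ?_
  let S := Localization.AtPrime q
  have : Algebra.EssFiniteType B S := .of_isLocalization _ q.primeCompl
  have : Algebra.EssFiniteType A S := .comp _ B _
  have : Module.Flat B S := IsLocalization.flat S q.primeCompl
  have : Module.Flat A S := .trans A B S
  obtain ⟨P, _, _, _, _, _, _, φ, hφ⟩ := exists_formallySmooth_presentation A S
  have : IsNoetherianRing P := Algebra.EssFiniteType.isNoetherianRing A P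
  let _ : Algebra P S := φ.toRingHom.toAlgebra
  have : IsScalarTower A P S := .of_algebraMap_eq fun a => (φ.commutes a).symm
  exact formallySmooth_of_isPerfect_ker_rationalPoint A P S hφ
    (h.isPerfect_ker_rationalPoint_of_isLocalization S (ResidueField S) q.primeCompl)

/-! ### Smooth algebras are homologically smooth -/

theorem formallyEtale_of_bijective_mapBaseChange {R S T : Type*} [CommRing R] [CommRing S]
    [CommRing T] [Algebra R S] [Algebra R T] [Algebra S T] [IsScalarTower R S T]
    [Algebra.FormallySmooth R T]
    (h : Function.Bijective (KaehlerDifferential.mapBaseChange R S T)) :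
    Algebra.FormallyEtale S T where
  subsingleton_kaehlerDifferential := subsingleton_of_forall_eq 0 fun x => by
    obtain ⟨w, rfl⟩ := KaehlerDifferential.map_surjective R S T x
    exact (KaehlerDifferential.exact_mapBaseChange_map R S T w).mpr (h.2 w)
  subsingleton_h1Cotangent := subsingleton_of_forall_eq 0 fun x => by
    have hδ : Algebra.H1Cotangent.δ R S T x = 0 := h.1 <| by
      rw [map_zero]
      exact (Algebra.H1Cotangent.exact_δ_mapBaseChange R S T _).mpr ⟨x, rfl⟩
    obtain ⟨w, rfl⟩ := (Algebra.H1Cotangent.exact_map_δ R S T x).mp hδ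
    rw [Subsingleton.elim w 0, map_zero]

theorem formallyEtale_mvPolynomial_of_basis {B L κ : Type u} [CommRing B] [CommRing L]
    [Algebra B L] [Algebra.FormallySmooth B L] [Algebra (MvPolynomial κ B) L]
    [IsScalarTower B (MvPolynomial κ B) L] (b : Module.Basis κ L Ω[L⁄B])
    (hb : ∀ i, b i = KaehlerDifferential.D B L
      (algebraMap (MvPolynomial κ B) L (MvPolynomial.X i))) :
    Algebra.FormallyEtale (MvPolynomial κ B) L := by
  let b' := (KaehlerDifferential.mvPolynomialBasis B κ).baseChange L
  have hmap : KaehlerDifferential.mapBaseChange B (MvPolynomial κ B) L =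
      (b'.equiv b (.refl κ)).toLinearMap := b'.ext fun i => by
    rw [LinearEquiv.coe_coe, Module.Basis.equiv_apply]
    simp [b', hb, Module.Basis.baseChange_apply]
  refine formallyEtale_of_bijective_mapBaseChange (R := B) ?_
  rw [hmap]
  exact LinearEquiv.bijective _

theorem flat_of_formallySmooth (D L : Type u) [CommRing D] [CommRing L] [Algebra D L]
    [IsNoetherianRing D] [Algebra.EssFiniteType D L] [Algebra.FormallySmooth D L] :
    Module.Flat D L := by
  obtain ⟨P, _, _, _, _, _, _, φ, hφ⟩ := exists_formallySmooth_presentation D L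
  have : IsNoetherianRing P := Algebra.EssFiniteType.isNoetherianRing D P
  exact Algebra.FormallySmooth.flat_of_algHom_of_isNoetherianRing φ hφ

theorem isWeaklyRegular_map_X {B κ : Type*} [CommRing B] {l : List κ} (hl : l.Nodup) :
    RingTheory.Sequence.IsWeaklyRegular (MvPolynomial κ B)
      (l.map (MvPolynomial.X (R := B))) := by
  refine ⟨fun i hi => (isSMulRegular_quotient_iff_mem_of_smul_mem _ _).mpr fun p hp => ?_⟩
  have hi' : i < l.length := by simpa using hi
  have hspan : (Ideal.ofList (List.take i (l.map (MvPolynomial.X (R := B)))) • ⊤ :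
      Submodule (MvPolynomial κ B) (MvPolynomial κ B)) =
      Ideal.span (MvPolynomial.X '' {j | j ∈ l.take i}) := by
    rw [Ideal.smul_eq_mul, Ideal.mul_top, Ideal.ofList]
    congr 1
    ext x
    simp [← List.map_take]
  have hnot : l[i] ∉ l.take i := fun hmem => by
    obtain ⟨j, hj, hji⟩ := List.mem_take_iff_getElem.mp hmem
    have := hl.getElem_inj_iff.mp hji
    lia
  rw [hspan, MvPolynomial.mem_ideal_span_X_image] at hp ⊢
  intro m hm
  rw [List.getElem_map, smul_eq_mul] at hp
  obtain ⟨j, hj, hmj⟩ := hp (Finsupp.single l[i] 1 + m) <| by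
    rwa [MvPolynomial.mem_support_iff, MvPolynomial.coeff_X_mul, ← MvPolynomial.mem_support_iff]
  have hne : l[i] ≠ j := fun h => hnot (h ▸ hj)
  exact ⟨j, hj, by simpa [Finsupp.single_apply, hne] using hmj⟩

section LocalRing

variable {B L : Type u} [CommRing B] [CommRing L] [Algebra B L]

theorem span_D_eq_top_of_formallyUnramified_quotient [IsLocalRing L] [Module.Finite L Ω[L⁄B]]
    {J : Ideal L} (hJ : J ≤ maximalIdeal L) [Algebra.FormallyUnramified B (L ⧸ J)] :
    Submodule.span L (Set.range fun j : J => KaehlerDifferential.D B L j) = ⊤ := by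
  refine top_le_iff.mp <| Submodule.le_of_le_smul_of_le_jacobson_bot (I := J) Module.Finite.fg_top
    (by rwa [IsLocalRing.jacobson_eq_maximalIdeal _ bot_ne_top]) fun x _ => ?_
  obtain ⟨c, hc⟩ := (KaehlerDifferential.exact_kerCotangentToTensor_mapBaseChange B L (L ⧸ J)
    Ideal.Quotient.mk_surjective (1 ⊗ₜ x)).mp (Subsingleton.elim _ _)
  obtain ⟨j, rfl⟩ := Ideal.toCotangent_surjective _ c
  rw [KaehlerDifferential.kerCotangentToTensor_toCotangent] at hc
  have hj : (j : L) ∈ J := Ideal.Quotient.eq_zero_iff_mem.mp j.2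
  have hx : x - KaehlerDifferential.D B L j ∈ J • (⊤ : Submodule L Ω[L⁄B]) := by
    rw [← one_tmul_eq_zero_iff, TensorProduct.tmul_sub, sub_eq_zero, hc]
  rw [← add_sub_cancel (KaehlerDifferential.D B L j) x]
  exact Submodule.add_mem_sup (Submodule.subset_span ⟨⟨j, hj⟩, rfl⟩) hx

theorem formallyUnramified_quotient_of_span_D_eq_top {s : Set L}
    (hs : Submodule.span L (KaehlerDifferential.D B L '' s) = ⊤) :
    Algebra.FormallyUnramified B (L ⧸ Ideal.span s) := by
  have hmap : KaehlerDifferential.map B B L (L ⧸ Ideal.span s) = 0 := by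
    refine LinearMap.ext_on hs ?_
    rintro _ ⟨x, hx, rfl⟩
    have : algebraMap L (L ⧸ Ideal.span s) x = 0 :=
      Ideal.Quotient.eq_zero_iff_mem.mpr (Ideal.subset_span hx)
    rw [KaehlerDifferential.map_D, this, map_zero, LinearMap.zero_apply]
  refine ⟨subsingleton_of_forall_eq 0 fun u => ?_⟩
  obtain ⟨u, rfl⟩ := KaehlerDifferential.map_surjective_of_surjective B B L (L ⧸ Ideal.span s)
    Ideal.Quotient.mk_surjective u
  rw [hmap, LinearMap.zero_apply]

theorem eq_of_le_of_formallyEtale_quotient [IsLocalRing L] [IsNoetherianRing L] {K J : Ideal L}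
    (hKJ : K ≤ J) (hJ : J ≠ ⊤) [Algebra.FormallyUnramified B (L ⧸ K)]
    [Algebra.FormallyEtale B (L ⧸ J)] : K = J := by
  let _ : Algebra (L ⧸ K) (L ⧸ J) := (Ideal.Quotient.factor hKJ).toAlgebra
  have : IsScalarTower B (L ⧸ K) (L ⧸ J) := .of_algebraMap_eq fun _ => rfl
  have : Nontrivial (L ⧸ J) := Ideal.Quotient.nontrivial_iff.mpr hJ
  have : Nontrivial (L ⧸ K) :=
    Ideal.Quotient.nontrivial_iff.mpr fun h => hJ (top_le_iff.mp (h ▸ hKJ))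
  have : IsLocalRing (L ⧸ K) := .of_surjective' (Ideal.Quotient.mk K) Ideal.Quotient.mk_surjective
  have hidem := (Algebra.FormallyEtale.iff_of_surjective (Ideal.Quotient.factor_surjective hKJ)).mp
    (Algebra.FormallyEtale.of_restrictScalars (R := B) (A := L ⧸ K) (B := L ⧸ J))
  have hker : RingHom.ker (algebraMap (L ⧸ K) (L ⧸ J)) = ⊥ :=
    ((Ideal.isIdempotentElem_iff_eq_bot_or_top_of_isLocalRing _).mp hidem).resolve_right
      (RingHom.ker_ne_top _)
  refine hKJ.antisymm fun x hx => Ideal.Quotient.eq_zero_iff_mem.mp ?_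
  rw [← Ideal.mem_bot, ← hker]
  exact Ideal.Quotient.eq_zero_iff_mem.mpr hx

theorem hasProjectiveDimensionLE_quotient_ofList [IsLocalRing L] [IsNoetherianRing L] {rs : List L}
    (hreg : RingTheory.Sequence.IsWeaklyRegular L rs) (hrs : ∀ r ∈ rs, r ∈ maximalIdeal L) :
    HasProjectiveDimensionLE (ModuleCat.of L (L ⧸ Ideal.ofList rs)) rs.length := by
  have hpd := ModuleCat.projectiveDimension_quotient_eq_add_length_of_isWeaklyRegular
    (ModuleCat.of L L) rs hreg hrs
  rw [ModuleCat.projectiveDimension_eq_zero_of_projective (ModuleCat.of L L), zero_add] at hpd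
  rw [← Ideal.mul_top (Ideal.ofList rs), ← smul_eq_mul, ← projectiveDimension_le_iff]
  exact hpd.le

variable (B) in
/- `J` is generated by a system of étale coordinates on `L`, which is a regular sequence. -/
theorem hasProjectiveDimensionLE_quotient_of_formallyEtale_quotient [IsLocalRing L]
    [IsNoetherianRing B] [Algebra.EssFiniteType B L] [Algebra.FormallySmooth B L]
    {J : Ideal L} (hJ : J ≤ maximalIdeal L) [Algebra.FormallyEtale B (L ⧸ J)] :
    HasProjectiveDimensionLE (ModuleCat.of L (L ⧸ J)) (Module.finrank L Ω[L⁄B]) := by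
  have : IsNoetherianRing L := Algebra.EssFiniteType.isNoetherianRing B L
  have : Module.FinitePresentation L Ω[L⁄B] := Module.finitePresentation_of_finite _ _
  obtain ⟨κ, y, b, hb⟩ := Module.exists_basis_of_span_of_flat
    (fun j : J => KaehlerDifferential.D B L j) (span_D_eq_top_of_formallyUnramified_quotient hJ)
  let _ : Fintype κ := @Fintype.ofFinite _ (Module.Finite.finite_basis b)
  let D := MvPolynomial κ B
  let _ : Algebra D L := (MvPolynomial.aeval fun i => (y i : L)).toRingHom.toAlgebra
  have hX (i : κ) : algebraMap D L (MvPolynomial.X i) = y i := MvPolynomial.aeval_X _ i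
  have : IsScalarTower B D L := .of_algebraMap_eq fun r =>
    ((MvPolynomial.aeval fun i => (y i : L)).commutes r).symm
  have : Algebra.FormallyEtale D L := formallyEtale_mvPolynomial_of_basis b fun i => by rw [hb, hX]
  have : Algebra.EssFiniteType D L := .of_comp B D L
  have : Module.Flat D L := flat_of_formallySmooth D L
  let l := (Finset.univ : Finset κ).toList
  have hmap : (l.map (MvPolynomial.X (R := B))).map (algebraMap D L) =
      l.map fun i => (y i : L) := by
    simp [Function.comp_def, hX]
  have hreg := RingTheory.Sequence.IsWeaklyRegular.of_flat (S := L)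
    (isWeaklyRegular_map_X (B := B) (Finset.nodup_toList (Finset.univ : Finset κ)))
  have hpd := hasProjectiveDimensionLE_quotient_ofList (rs := l.map fun i => (y i : L))
    (hmap ▸ hreg) (by simpa using fun i _ => hJ (y i).2)
  have hspan : Ideal.ofList (l.map fun i => (y i : L)) =
      Ideal.span (Set.range fun i => (y i : L)) := by
    simp [Ideal.ofList, l, Set.range]
  have : Algebra.FormallyUnramified B (L ⧸ Ideal.span (Set.range fun i => (y i : L))) :=
    formallyUnramified_quotient_of_span_D_eq_top <| by
      have hDy : KaehlerDifferential.D B L ∘ (fun i => (y i : L)) = b := funext fun i => (hb i).symm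
      rw [← Set.range_comp, hDy, b.span_eq]
  rw [hspan, eq_of_le_of_formallyEtale_quotient (B := B) (J := J)
    (Ideal.span_le.mpr (Set.range_subset_iff.mpr fun i => (y i).2))
    fun h => (maximalIdeal L).ne_top_iff_one.mp Ideal.IsPrime.ne_top' (hJ (h ▸ trivial))] at hpd
  simpa [l, Module.finrank_eq_card_basis b] using hpd

end LocalRing

section Retract

variable {B R : Type u} (L : Type u) [CommRing B] [CommRing R] [CommRing L] [Algebra B R]
  [Algebra R L] [Algebra B L] [IsScalarTower B R L]

theorem finrank_kaehlerDifferential_le_of_formallyEtale [Nontrivial L] [Algebra.FormallyEtale R L]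
    {N : ℕ} {s : (Fin N → R) →ₗ[R] Ω[R⁄B]} (hs : Function.Surjective s) :
    Module.finrank L Ω[L⁄B] ≤ N := by
  let e := KaehlerDifferential.tensorKaehlerEquivOfFormallyEtale B R L
  let φ := e.toLinearMap ∘ₗ s.baseChange L ∘ₗ
    (TensorProduct.piScalarRight R L L (Fin N)).symm.toLinearMap
  have hφ : Function.Surjective φ := e.surjective.comp
    ((LinearMap.lTensor_surjective L hs).comp (LinearEquiv.surjective _))
  simpa using LinearMap.finrank_le_finrank_of_surjective hφ

theorem formallyEtale_quotient_map_ker (M : Submonoid R) [IsLocalization M L] (μ : R →ₐ[B] B) :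
    Algebra.FormallyEtale B (L ⧸ (RingHom.ker μ).map (algebraMap R L)) := by
  let J := (RingHom.ker μ).map (algebraMap R L)
  have hμ : Function.Surjective μ := fun b => ⟨algebraMap B R b, μ.commutes b⟩
  have hcomp : (Ideal.Quotient.mk J).comp (algebraMap R L) =
      (algebraMap B (L ⧸ J)).comp μ.toRingHom := by
    ext x
    change Ideal.Quotient.mk J (algebraMap R L x) = Ideal.Quotient.mk J (algebraMap B L (μ x))
    rw [Ideal.Quotient.eq, IsScalarTower.algebraMap_apply B R L, ← map_sub]
    refine Ideal.mem_map_of_mem _ ?_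
    rw [RingHom.mem_ker, map_sub, μ.commutes]
    exact sub_self _
  have : IsLocalization (M.map μ.toRingHom) (L ⧸ J) :=
    IsLocalization.of_surjective (S := L) M μ.toRingHom hμ (Ideal.Quotient.mk J)
      Ideal.Quotient.mk_surjective hcomp (Ideal.mk_ker (I := J)).le
  exact .of_isLocalization (M.map μ.toRingHom)

theorem hasProjectiveDimensionLE_quotient_map_ker [IsNoetherianRing B]
    [Algebra.EssFiniteType B R] [Algebra.FormallySmooth B R] (p : Ideal R) [p.IsPrime]
    [IsLocalization.AtPrime L p] (μ : R →ₐ[B] B) {N : ℕ} {s : (Fin N → R) →ₗ[R] Ω[R⁄B]}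
    (hs : Function.Surjective s) :
    HasProjectiveDimensionLE (ModuleCat.of L (L ⧸ (RingHom.ker μ).map (algebraMap R L))) N := by
  set J := (RingHom.ker μ).map (algebraMap R L)
  have : IsLocalRing L := IsLocalization.AtPrime.isLocalRing L p
  by_cases hJ : J = ⊤
  · have : Subsingleton (L ⧸ J) := Ideal.Quotient.subsingleton_iff.mpr hJ
    have hzero := ModuleCat.isZero_of_subsingleton (ModuleCat.of L (L ⧸ J))
    have := hzero.hasProjectiveDimensionLT_zero
    exact hasProjectiveDimensionLT_of_ge _ 0 _ (Nat.zero_le _)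
  have : Algebra.FormallyEtale R L := .of_isLocalization p.primeCompl
  have : Algebra.FormallySmooth B L := .comp B R L
  have : Algebra.EssFiniteType R L := .of_isLocalization _ p.primeCompl
  have : Algebra.EssFiniteType B L := .comp B R L
  have : Algebra.FormallyEtale B (L ⧸ J) := formallyEtale_quotient_map_ker L p.primeCompl μ
  have := hasProjectiveDimensionLE_quotient_of_formallyEtale_quotient B (le_maximalIdeal hJ)
  exact hasProjectiveDimensionLT_of_ge _ _ _
    (Nat.succ_le_succ (finrank_kaehlerDifferential_le_of_formallyEtale L hs))

end Retract

theorem isPerfect_quotient_ker_of_formallySmooth {B R : Type u} [CommRing B] [CommRing R]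
    [Algebra B R] [IsNoetherianRing B] [Algebra.EssFiniteType B R] [Algebra.FormallySmooth B R]
    (μ : R →ₐ[B] B) : Module.IsPerfect R (R ⧸ RingHom.ker μ) := by
  have : IsNoetherianRing R := Algebra.EssFiniteType.isNoetherianRing B R
  obtain ⟨N, s, hs⟩ := Module.Finite.exists_fin' R Ω[R⁄B]
  refine ⟨N, .of_hasProjectiveDimensionLE ?_⟩
  rw [ModuleCat.hasProjectiveDimensionLE_iff_forall_primeSpectrum]
  intro p
  let Rp := Localization.AtPrime p.asIdeal
  let M := ModuleCat.of R (R ⧸ RingHom.ker μ)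
  have hpd := hasProjectiveDimensionLE_quotient_map_ker Rp p.asIdeal μ hs
  have hbc : IsBaseChange Rp (M.localizedModuleMkLinearMap p.asIdeal.primeCompl) :=
    (isLocalizedModule_iff_isBaseChange p.asIdeal.primeCompl Rp _).mp
      (ModuleCat.localizedModule_isLocalizedModule M p.asIdeal.primeCompl)
  let e := (Algebra.TensorProduct.quotIdealMapEquivTensorQuot Rp (RingHom.ker μ)).toLinearEquiv
  exact ModuleCat.hasProjectiveDimensionLE_of_linearEquiv
    (M := ModuleCat.of Rp (Rp ⧸ (RingHom.ker μ).map (algebraMap R Rp)))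
    (N := M.localizedModule p.asIdeal.primeCompl) (e.trans hbc.equiv) N

theorem isHomologicallySmooth_of_formallySmooth (A B : Type u) [CommRing A] [CommRing B]
    [Algebra A B] [IsNoetherianRing A] [Algebra.EssFiniteType A B] [Algebra.FormallySmooth A B] :
    IsHomologicallySmooth A B :=
  have : IsNoetherianRing B := Algebra.EssFiniteType.isNoetherianRing A B
  isPerfect_quotient_ker_of_formallySmooth (Algebra.TensorProduct.lmul'' A (S := B))

theorem isHomologicallySmooth_iff_isPerfect (A B : Type u) [CommRing A] [CommRing B]
    [Algebra A B] :
    IsHomologicallySmooth A B ↔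
      letI := ((Algebra.TensorProduct.lmul' A (S := B)).toRingHom).toModule
      Module.IsPerfect (B ⊗[A] B) B := by
  let _ := ((Algebra.TensorProduct.lmul' A (S := B)).toRingHom).toModule
  let f := LinearMap.toSpanSingleton (B ⊗[A] B) B 1
  have hf (x : B ⊗[A] B) : f x = Algebra.TensorProduct.lmul' A x := mul_one _
  have hker : LinearMap.ker f = KaehlerDifferential.ideal A B := Submodule.ext fun x => by
    rw [LinearMap.mem_ker, hf, KaehlerDifferential.ideal, RingHom.mem_ker]
  have hsurj : Function.Surjective f := fun b => ⟨b ⊗ₜ 1, by simp [hf]⟩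
  let e := (Submodule.quotEquivOfEq _ _ hker.symm).trans (f.quotKerEquivOfSurjective hsurj)
  exact ⟨.of_linearEquiv e, .of_linearEquiv e.symm⟩

end

open TensorProduct in
/-- **Homological smoothness is smoothness, for flat essentially-of-finite-type algebras.**
Let `A` be a commutative noetherian ring and `B` a flat `A`-algebra which is essentially of
finite type over `A`.  Then `B` is a perfect module over the enveloping ring `B ⊗[A] B`
(acting through the multiplication map `μ : B ⊗[A] B → B`) if and only if `B` is a
formally smooth `A`-algebra. -/
theorem isPerfect_over_enveloping_iff_formallySmooth
    {A B : Type u} [CommRing A] [CommRing B] [Algebra A B]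
    [IsNoetherianRing A] [Algebra.EssFiniteType A B]
    (hflat : Module.Flat A B) :
    (letI := ((Algebra.TensorProduct.lmul' A (S := B)).toRingHom).toModule
     Module.IsPerfect (B ⊗[A] B) B) ↔
    Algebra.FormallySmooth A B := by
  exact (isHomologicallySmooth_iff_isPerfect A B).symm.trans
    ⟨fun h => h.formallySmooth, fun _ => isHomologicallySmooth_of_formallySmooth A B⟩
end
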